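/- arXiv:2505.04292 — 2 statements merged into one kernel-verified Lean document; each statement's English description precedes it below -/
import Mathlib

section
/- Let G be the fundamental group of a graph of groups with vertex groups (G_v)_{v∈V} and edge groups (G_e)_{e∈E}, and let F be a family of subgroups of G. Then cat_F(G) ≤ sup_{v∈V} cat_{F|_{G_v}}(G_v) + sup_{e∈E} ( cat_{F|_{G_e}}(G_e) + 1 ). -/
open scoped Topology
open CategoryTheory

noncomputable section

/-- A *family of subgroups* of a group `G`: a non-empty set of subgroups that is closed under
conjugation and under passing to subgroups. -/
structure IsSubgroupFamily {G : Type} [Group G] (F : Set (Subgroup G)) : Prop where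
  nonempty : F.Nonempty
  conj_mem : ∀ H ∈ F, ∀ g : G, H.map (MulAut.conj g).toMonoidHom ∈ F
  mem_of_le : ∀ H ∈ F, ∀ K : Subgroup G, K ≤ H → K ∈ F

/-- The restriction `F|_H = {F ⊆ H : F ∈ F}` of a family of subgroups of `G` to a subgroup `H`,
viewed as a set of subgroups of `H`. -/
def restrictFamily {G : Type} [Group G] (F : Set (Subgroup G)) (H : Subgroup G) :
    Set (Subgroup H) :=
  {K : Subgroup H | K.map H.subtype ∈ F}

/-- The closed unit disk `Dⁿ ⊆ ℝⁿ`. -/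
def UnitDisk (n : ℕ) : Set (EuclideanSpace ℝ (Fin n)) := Metric.closedBall 0 1

/-- The unit sphere `Sⁿ⁻¹ ⊆ ℝⁿ` (the boundary of `Dⁿ`). -/
def UnitSphere (n : ℕ) : Set (EuclideanSpace ℝ (Fin n)) := Metric.sphere 0 1

/-- A `G`-CW-complex, presented by its skeletal data: for each `n`, a set `cells n` of
`G`-orbit representatives of the open `n`-cells, the stabiliser `stab n i` of the representative
`i`, and an equivariant characteristic map `G/Gᵢ × Dⁿ → X` for each representative.
The open cells partition the space, the attaching maps send the boundary spheres to cells of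
strictly smaller dimension, and the space carries the weak topology with respect to the closed
cells.  (By equivariance, a group element fixing a cell setwise fixes it pointwise, so this
presents exactly a `G`-CW-complex, together with a choice of orbit representatives of cells.) -/
structure GCWComplex (G : Type) [Group G] : Type 1 where
  space : Type
  [topology : TopologicalSpace space]
  [action : MulAction G space]
  t2 : T2Space space
  continuous_smul : ∀ g : G, Continuous fun x : space => g • x
  /-- `G`-orbit representatives of the `n`-cells -/
  cells : ℕ → Type
  /-- the stabiliser of the chosen orbit representative -/
  stab : ∀ n, cells n → Subgroup G
  /-- the (curried) equivariant characteristic map of the orbit of cells indexed by `i` -/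
  charMap : ∀ n (i : cells n), (G ⧸ stab n i) → UnitDisk n → space
  charMap_continuous : ∀ n i c, Continuous (charMap n i c)
  charMap_equivariant : ∀ n i (g : G) (c : G ⧸ stab n i) z,
    charMap n i (g • c) z = g • charMap n i c z
  /-- boundary spheres are attached to cells of strictly smaller dimension -/
  sphere_le : ∀ n i (c : G ⧸ stab n i) (z : UnitDisk n),
    ‖(z : EuclideanSpace ℝ (Fin n))‖ = 1 →
    ∃ (m : ℕ) (_ : m < n) (j : cells m) (c' : G ⧸ stab m j) (w : UnitDisk m),
      ‖(w : EuclideanSpace ℝ (Fin m))‖ < 1 ∧ charMap m j c' w = charMap n i c z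
  /-- the open cells partition the space -/
  partition : ∀ x : space,
    ∃! p : Σ (n : ℕ) (i : cells n), (G ⧸ stab n i) × UnitDisk n,
      ‖(p.2.2.2 : EuclideanSpace ℝ (Fin p.1))‖ < 1 ∧ charMap p.1 p.2.1 p.2.2.1 p.2.2.2 = x
  /-- the space carries the weak topology determined by the closed cells -/
  weak_topology : ∀ A : Set space, IsClosed A ↔ ∀ n i c, IsClosed (charMap n i c ⁻¹' A)

attribute [instance] GCWComplex.topology GCWComplex.action

namespace GCWComplex

variable {G : Type} [Group G]

/-- The `G`-CW-complex `X` has dimension at most `c`. -/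
def DimLE (X : GCWComplex G) (c : ℕ∞) : Prop :=
  ∀ n : ℕ, c < (n : ℕ∞) → IsEmpty (X.cells n)

/-- The dimension of a `G`-CW-complex. -/
def dim (X : GCWComplex G) : ℕ∞ :=
  sInf {c : ℕ∞ | X.DimLE c}

/-- All cell stabilisers of `X` belong to the family `F` (for a conjugation-closed family `F`
this says exactly that `X` has isotropy in `F`). -/
def IsotropyIn (X : GCWComplex G) (F : Set (Subgroup G)) : Prop :=
  ∀ n i, X.stab n i ∈ F

/-- The `G`-CW-complex `X` is free. -/
def IsFree (X : GCWComplex G) : Prop :=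
  ∀ n i, X.stab n i = ⊥

end GCWComplex

/-- A `G`-equivariant continuous map. -/
structure GMap (G : Type) [Group G] (X Y : Type) [TopologicalSpace X] [TopologicalSpace Y]
    [MulAction G X] [MulAction G Y] where
  toFun : X → Y
  continuous_toFun : Continuous toFun
  equivariant : ∀ (g : G) (x : X), toFun (g • x) = g • toFun x

/-- `cat^G_F(X)`: the infimum of all `n` for which there exist an `n`-dimensional
`G`-CW-complex `N` all of whose cell stabilisers lie in `F` and a `G`-map `X → N`. -/
def gcat (G : Type) [Group G] (F : Set (Subgroup G)) (X : Type) [TopologicalSpace X]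
    [MulAction G X] : ℕ∞ :=
  sInf {c : ℕ∞ | ∃ N : GCWComplex G, N.IsotropyIn F ∧ N.DimLE c ∧
    Nonempty (GMap G X N.space)}

/-- A CW-structure on a topological space (the non-equivariant case of a `G`-CW-structure). -/
structure CWStructure (X : Type) [TopologicalSpace X] : Type 1 where
  t2 : T2Space X
  cells : ℕ → Type
  charMap : ∀ n, cells n → UnitDisk n → X
  charMap_continuous : ∀ n i, Continuous (charMap n i)
  sphere_le : ∀ n i (z : UnitDisk n), ‖(z : EuclideanSpace ℝ (Fin n))‖ = 1 →
    ∃ (m : ℕ) (_ : m < n) (j : cells m) (w : UnitDisk m),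
      ‖(w : EuclideanSpace ℝ (Fin m))‖ < 1 ∧ charMap m j w = charMap n i z
  partition : ∀ x : X, ∃! p : Σ (n : ℕ) (_ : cells n), UnitDisk n,
      ‖(p.2.2 : EuclideanSpace ℝ (Fin p.1))‖ < 1 ∧ charMap p.1 p.2.1 p.2.2 = x
  weak_topology : ∀ A : Set X, IsClosed A ↔ ∀ n i, IsClosed (charMap n i ⁻¹' A)

/-- The CW-complex has dimension at most `c`. -/
def CWStructure.DimLE {X : Type} [TopologicalSpace X] (C : CWStructure X) (c : ℕ∞) : Prop :=
  ∀ n : ℕ, c < (n : ℕ∞) → IsEmpty (C.cells n)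

/-- A CW-model of the classifying space `BG`: an aspherical path-connected CW-complex with
fundamental group isomorphic to `G`. -/
structure ClassifyingModel (G : Type) [Group G] : Type 1 where
  space : Type
  [topology : TopologicalSpace space]
  cw : CWStructure space
  pathConnected : PathConnectedSpace space
  basepoint : space
  /-- all higher homotopy groups vanish -/
  aspherical : ∀ n : ℕ, 2 ≤ n → Subsingleton (HomotopyGroup.Pi n space basepoint)
  iso : FundamentalGroup space basepoint ≃* G

attribute [instance] ClassifyingModel.topology

/-- The geometric dimension of `G`: the infimum of the dimensions of CW-models of `BG`. -/
def gd (G : Type) [Group G] : ℕ∞ :=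
  sInf {c : ℕ∞ | ∃ Y : ClassifyingModel G, Y.cw.DimLE c}

attribute [local instance] Path.Homotopic.setoid

/-- The element of the fundamental group determined by a homotopy class of loops. -/
def pathToPi1 {Y : Type} [TopologicalSpace Y] {y : Y} (p : Path.Homotopic.Quotient y y) :
    FundamentalGroup Y y :=
  FundamentalGroup.fromPath (X := TopCat.of Y) p

/-- The condition on a member `U` of an open cover realising `cat_F`: for every `y ∈ U`, the
image of `π₁(U, y) → π₁(Y, y)`, transported to the basepoint `y₀` along any path and compared
with `F` via the identification `e`, is contained in a member of `F`.  (For a subgroup-closed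
family `F` this says exactly that the image subgroup belongs to `F`; for a conjugation-closed
family the condition is independent of the chosen path.) -/
def FCoverCondition {Y : Type} [TopologicalSpace Y] {G : Type} [Group G] (y₀ : Y)
    (e : FundamentalGroup Y y₀ ≃* G) (F : Set (Subgroup G)) (U : Set Y) : Prop :=
  ∀ y ∈ U, ∀ q : Path y₀ y, ∃ H ∈ F, ∀ p : Path y y, (∀ t, p t ∈ U) →
    e (pathToPi1 (Path.Homotopic.Quotient.trans ⟦q⟧
      (Path.Homotopic.Quotient.trans ⟦p⟧ ⟦q.symm⟧))) ∈ H

/-- `cat_F(Y)` for a space `Y`, with respect to an identification `e : π₁(Y, y₀) ≅ G` and a set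
`F` of subgroups of `G`: the infimum of all `n` such that `Y` admits a cover by `n + 1` open
subsets whose `π₁`-images lie in `F`. -/
def catSpace {Y : Type} [TopologicalSpace Y] {G : Type} [Group G] (y₀ : Y)
    (e : FundamentalGroup Y y₀ ≃* G) (F : Set (Subgroup G)) : ℕ∞ :=
  sInf {c : ℕ∞ | ∃ n : ℕ, c = (n : ℕ∞) ∧ ∃ U : Fin (n + 1) → Set Y,
    (∀ i, IsOpen (U i)) ∧ (∀ y : Y, ∃ i, y ∈ U i) ∧ ∀ i, FCoverCondition y₀ e F (U i)}

/-- `cat_F(G) := cat_F(BG)`; the value is independent of the chosen CW-model of `BG`, so we take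
the infimum over all models. -/
def catGroup (G : Type) [Group G] (F : Set (Subgroup G)) : ℕ∞ :=
  sInf {c : ℕ∞ | ∃ Y : ClassifyingModel G, c = catSpace Y.basepoint Y.iso F}


namespace Mil
open scoped Classical

variable {S : Type}

/-- Finite vertex sets with at most one vertex of each colour. -/
def Chn (s : Finset (S × ℕ)) : Prop := ∀ p ∈ s, ∀ q ∈ s, p.2 = q.2 → p = q

/-- The simplex spanned by a finite vertex set. -/
def Spx (s : Finset (S × ℕ)) : Set (S × ℕ → ℝ) :=
  {x | (∀ p, 0 ≤ x p) ∧ (∀ p, p ∉ s → x p = 0) ∧ ∑ p ∈ s, x p = 1}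

/-- The Milnor-type complex on the label set `S`. -/
structure EM (S : Type) where
  val : S × ℕ → ℝ
  prop : ∃ s, Chn s ∧ val ∈ Spx s

theorem EM.ext' {x y : EM S} (h : x.val = y.val) : x = y := by
  cases x; cases y; cases h; rfl

/-- inclusion of a simplex -/
def inc (s : {s : Finset (S × ℕ) // Chn s}) (x : Spx s.1) : EM S := ⟨x.1, s.1, s.2, x.2⟩

instance : TopologicalSpace (EM S) :=
  ⨆ s : {s : Finset (S × ℕ) // Chn s}, TopologicalSpace.coinduced (inc s) inferInstance

theorem continuous_iff_inc {Z : Type*} [TopologicalSpace Z] {f : EM S → Z} :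
    Continuous f ↔ ∀ s, Continuous (fun x => f (inc s x)) := by
  rw [continuous_iSup_dom]
  simp only [continuous_coinduced_dom]
  rfl

theorem isClosed_iff_inc {A : Set (EM S)} :
    IsClosed A ↔ ∀ s, IsClosed (inc s ⁻¹' A) := by
  rw [isClosed_iSup_iff]
  simp only [isClosed_coinduced]

theorem isOpen_iff_inc {A : Set (EM S)} :
    IsOpen A ↔ ∀ s, IsOpen (inc s ⁻¹' A) := by
  rw [isOpen_iSup_iff]
  simp only [isOpen_coinduced]

theorem continuous_inc (s : {s : Finset (S × ℕ) // Chn s}) : Continuous (inc s) :=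
  continuous_iff_inc.1 continuous_id s

theorem EM.finite_supp (x : EM S) : {p | x.val p ≠ 0}.Finite := by
  obtain ⟨s, _, hx⟩ := x.prop
  refine s.finite_toSet.subset fun p hp => ?_
  by_contra h
  exact hp (hx.2.1 p h)

/-- the support of a point -/
def EM.supp (x : EM S) : Finset (S × ℕ) := x.finite_supp.toFinset

@[simp] theorem EM.mem_supp {x : EM S} {p : S × ℕ} : p ∈ x.supp ↔ x.val p ≠ 0 := by
  simp [EM.supp]

theorem EM.nonneg (x : EM S) (p : S × ℕ) : 0 ≤ x.val p := by
  obtain ⟨s, _, hx⟩ := x.prop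
  exact hx.1 p

theorem EM.mem_Spx_iff {x : EM S} {s : Finset (S × ℕ)} : x.val ∈ Spx s ↔ x.supp ⊆ s := by
  constructor
  · intro h p hp
    by_contra hps
    exact EM.mem_supp.1 hp (h.2.1 p hps)
  · intro h
    obtain ⟨t, _, hx⟩ := x.prop
    have e1 : ∑ p ∈ x.supp, x.val p = ∑ p ∈ t, x.val p := by
      refine Finset.sum_subset ?_ ?_
      · intro p hp
        by_contra hps
        exact EM.mem_supp.1 hp (hx.2.1 p hps)
      · intro p _ hp
        simpa using hp
    have e2 : ∑ p ∈ x.supp, x.val p = ∑ p ∈ s, x.val p := by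
      refine Finset.sum_subset h ?_
      intro p _ hp
      simpa using hp
    refine ⟨x.nonneg, fun p hp => ?_, by rw [← e2, e1, hx.2.2]⟩
    by_contra hne
    exact hp (h (EM.mem_supp.2 hne))

theorem EM.supp_chn (x : EM S) : Chn x.supp := by
  obtain ⟨t, ht, hx⟩ := x.prop
  intro p hp q hq h
  exact ht p (EM.mem_Spx_iff.1 hx hp) q (EM.mem_Spx_iff.1 hx hq) h

theorem EM.supp_nonempty (x : EM S) : x.supp.Nonempty := by
  have h := (EM.mem_Spx_iff (x := x)).2 (subset_refl _)
  by_contra hn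
  rw [Finset.not_nonempty_iff_eq_empty] at hn
  have := h.2.2
  rw [hn] at this
  simp at this

theorem EM.pos_of_mem {x : EM S} {p : S × ℕ} (h : p ∈ x.supp) : 0 < x.val p :=
  lt_of_le_of_ne (x.nonneg p) (Ne.symm (EM.mem_supp.1 h))

theorem Chn.mono {s t : Finset (S × ℕ)} (h : Chn t) (hst : s ⊆ t) : Chn s :=
  fun p hp q hq e => h p (hst hp) q (hst hq) e

theorem inc_eq_of_val {s : {s : Finset (S × ℕ) // Chn s}} {x : EM S} (h : x.val ∈ Spx s.1) :
    inc s ⟨x.val, h⟩ = x := rfl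

theorem supp_inc_subset {s : {s : Finset (S × ℕ) // Chn s}} (x : Spx s.1) :
    (inc s x).supp ⊆ s.1 := EM.mem_Spx_iff.1 x.2

theorem continuous_coord (p : S × ℕ) : Continuous (fun x : EM S => x.val p) := by
  rw [continuous_iff_inc]
  intro s
  exact (continuous_apply p).comp continuous_subtype_val

instance : T2Space (EM S) := by
  refine ⟨fun x y hxy => ?_⟩
  have : ∃ p, x.val p ≠ y.val p := by
    by_contra h
    push Not at h
    exact hxy (EM.ext' (funext h))
  obtain ⟨p, hp⟩ := this
  exact separated_by_continuous (continuous_coord p) hp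

theorem isClosed_Spx (s : Finset (S × ℕ)) : IsClosed (Spx s) := by
  have : Spx s = (⋂ p, {x : S × ℕ → ℝ | 0 ≤ x p}) ∩ ((⋂ p, {x : S × ℕ → ℝ | p ∉ s → x p = 0}) ∩
      {x | ∑ p ∈ s, x p = 1}) := by
    ext x; simp [Spx]
  rw [this]
  refine (isClosed_iInter fun p => isClosed_le continuous_const (continuous_apply p)).inter
    ((isClosed_iInter fun p => ?_).inter (isClosed_eq (by fun_prop) continuous_const))
  by_cases h : p ∈ s
  · simp [h]
  · simpa [h] using isClosed_eq (continuous_apply p) continuous_const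

theorem Spx_le_one {s : Finset (S × ℕ)} {x : S × ℕ → ℝ} (hx : x ∈ Spx s) (p : S × ℕ) :
    x p ≤ 1 := by
  by_cases h : p ∈ s
  · rw [← hx.2.2]
    exact Finset.single_le_sum (f := x) (fun q _ => hx.1 q) h
  · rw [hx.2.1 p h]; exact zero_le_one

instance compactSpx (s : Finset (S × ℕ)) : CompactSpace (Spx s) := by
  rw [← isCompact_iff_compactSpace]
  refine IsCompact.of_isClosed_subset (isCompact_univ_pi (fun _ : S × ℕ => isCompact_Icc (a := (0:ℝ)) (b := 1)))
    (isClosed_Spx s) ?_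
  intro x hx p _
  exact ⟨hx.1 p, Spx_le_one hx p⟩

/-- total weight of a colour-weight function is continuous -/
theorem continuous_weight (a : ℕ → ℝ) :
    Continuous (fun x : EM S => ∑ p ∈ x.supp, a p.2 * x.val p) := by
  rw [continuous_iff_inc]
  intro s
  have : (fun x : Spx s.1 => ∑ p ∈ (inc s x).supp, a p.2 * (inc s x).val p) =
      fun x : Spx s.1 => ∑ p ∈ s.1, a p.2 * x.1 p := by
    funext x
    refine Finset.sum_subset (supp_inc_subset x) ?_
    intro p _ hp
    have : (inc s x).val p = 0 := by simpa using hp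
    rw [this, mul_zero]
  rw [this]
  exact continuous_finsetSum _ fun p _ =>
    continuous_const.mul ((continuous_apply p).comp continuous_subtype_val)

/-- compact sets have bounded colours -/
theorem exists_color_bound {K : Set (EM S)} (hK : IsCompact K) :
    ∃ N : ℕ, ∀ x ∈ K, ∀ p ∈ x.supp, p.2 < N := by
  by_contra hcon
  push Not at hcon
  choose x hxK p hp hN using hcon
  -- choose an increasing subsequence of colours
  have hex : ∃ φ : ℕ → ℕ, StrictMono fun k => (p (φ k)).2 := by
    have hstep : ∀ n : ℕ, n < (p ((p n).2 + 1)).2 := fun n =>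
      lt_of_le_of_lt (le_refl n) (lt_of_lt_of_le (Nat.lt_succ_of_le (hN n)) (hN _))
    refine ⟨fun k => Nat.rec 0 (fun _ n => (p n).2 + 1) k, strictMono_nat_of_lt_succ fun k => ?_⟩
    exact lt_of_lt_of_le (Nat.lt_succ_self _) (hN _)
  obtain ⟨φ, hφ⟩ := hex
  let a : ℕ → ℝ := fun n => if h : ∃ k, (p (φ k)).2 = n then
    (h.choose : ℝ) / (x (φ h.choose)).val (p (φ h.choose)) else 0
  have ha0 : ∀ n, 0 ≤ a n := by
    intro n
    simp only [a]
    split_ifs with h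
    · exact div_nonneg (Nat.cast_nonneg _) (EM.nonneg _ _)
    · exact le_rfl
  have hak : ∀ k, a (p (φ k)).2 * (x (φ k)).val (p (φ k)) = k := by
    intro k
    have h : ∃ k', (p (φ k')).2 = (p (φ k)).2 := ⟨k, rfl⟩
    have hc : h.choose = k := hφ.injective h.choose_spec
    simp only [a]
    rw [dif_pos h, hc, div_mul_cancel₀]
    exact EM.mem_supp.1 (hp _)
  have hb := hK.bddAbove_image (continuous_weight a).continuousOn
  obtain ⟨M, hM⟩ := hb
  obtain ⟨k, hk⟩ := exists_nat_gt M
  have h1 := hM ⟨x (φ k), hxK _, rfl⟩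
  have h2 : (k : ℝ) ≤ ∑ q ∈ (x (φ k)).supp, a q.2 * (x (φ k)).val q := by
    rw [← hak k]
    exact Finset.single_le_sum (f := fun q => a q.2 * (x (φ k)).val q)
      (fun q _ => mul_nonneg (ha0 _) (EM.nonneg _ _)) (hp _)
  simp only at h1
  linarith

end Mil

namespace Mil
set_option linter.unusedSectionVars false
open scoped Classical

variable {S : Type} {G : Type} [Group G]

/-- action on vertices -/
def ve (g : G) : G × ℕ ≃ G × ℕ where
  toFun p := (g * p.1, p.2)
  invFun p := (g⁻¹ * p.1, p.2)
  left_inv p := by simp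
  right_inv p := by simp

@[simp] theorem ve_snd (g : G) (p : G × ℕ) : (ve g p).2 = p.2 := rfl
@[simp] theorem ve_fst (g : G) (p : G × ℕ) : (ve g p).1 = g * p.1 := rfl

theorem ve_symm (g : G) : (ve g).symm = ve g⁻¹ := by
  ext p <;> simp [ve]

theorem ve_mul (g h : G) (p : G × ℕ) : ve g (ve h p) = ve (g * h) p := by
  ext <;> simp [mul_assoc]

/-- action on vertex sets -/
def vs (g : G) (s : Finset (G × ℕ)) : Finset (G × ℕ) := s.map (ve g).toEmbedding

theorem mem_vs {g : G} {s : Finset (G × ℕ)} {p : G × ℕ} : p ∈ vs g s ↔ ve g⁻¹ p ∈ s := by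
  rw [vs, Finset.mem_map_equiv, ve_symm]

theorem ve_mem_vs {g : G} {s : Finset (G × ℕ)} {p : G × ℕ} (h : p ∈ s) : ve g p ∈ vs g s := by
  rw [mem_vs, ve_mul]
  simpa [ve] using h

theorem chn_vs {g : G} {s : Finset (G × ℕ)} (h : Chn s) : Chn (vs g s) := by
  intro p hp q hq e
  rw [mem_vs] at hp hq
  exact (ve g⁻¹).injective (h _ hp _ hq e)

theorem card_vs (g : G) (s : Finset (G × ℕ)) : (vs g s).card = s.card := Finset.card_map _

theorem vs_mul (g h : G) (s : Finset (G × ℕ)) : vs g (vs h s) = vs (g * h) s := by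
  ext p; simp [mem_vs, ve_mul]

theorem vs_one (s : Finset (G × ℕ)) : vs 1 s = s := by
  ext p; rw [mem_vs]; simp [ve]

theorem spx_vs {g : G} {s : Finset (G × ℕ)} {x : G × ℕ → ℝ} (h : x ∈ Spx s) :
    (fun p => x (ve g⁻¹ p)) ∈ Spx (vs g s) := by
  refine ⟨fun p => h.1 _, fun p hp => h.2.1 _ fun h' => hp (mem_vs.2 h'), ?_⟩
  rw [vs, Finset.sum_map, ← h.2.2]
  refine Finset.sum_congr rfl fun p _ => ?_
  simp [ve]

instance : MulAction G (EM G) where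
  smul g x := ⟨fun p => x.val (ve g⁻¹ p), by
    obtain ⟨s, hs, hx⟩ := x.prop
    exact ⟨vs g s, chn_vs hs, spx_vs hx⟩⟩
  one_smul x := by
    apply EM.ext'
    change (fun p => x.val (ve 1⁻¹ p)) = x.val
    funext p
    simp [ve]
  mul_smul g h x := by
    apply EM.ext'
    change (fun p => x.val (ve (g * h)⁻¹ p)) = (fun p => x.val (ve h⁻¹ (ve g⁻¹ p)))
    funext p
    rw [ve_mul, mul_inv_rev]

theorem smul_val (g : G) (x : EM G) (p : G × ℕ) : (g • x).val p = x.val (ve g⁻¹ p) := rfl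

theorem supp_smul (g : G) (x : EM G) : (g • x).supp = vs g x.supp := by
  ext p
  rw [EM.mem_supp, mem_vs, EM.mem_supp, smul_val]

instance : ContinuousConstSMul G (EM G) where
  continuous_const_smul g := by
    rw [continuous_iff_inc]
    intro s
    have : (fun x : Spx s.1 => g • inc s x) = fun x : Spx s.1 =>
        inc ⟨vs g s.1, chn_vs s.2⟩ ⟨fun p => x.1 (ve g⁻¹ p), spx_vs x.2⟩ := rfl
    rw [this]
    refine (continuous_inc _).comp (Continuous.subtype_mk ?_ _)
    exact continuous_pi fun p => (continuous_apply _).comp continuous_subtype_val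

theorem eq_one_of_slice {g : G} {x : EM G} {a : G} {n : ℕ} (h : x.val (a, n) ≠ 0)
    (h' : (g • x).val (a, n) ≠ 0) : g = 1 := by
  rw [smul_val] at h'
  have := x.supp_chn _ (EM.mem_supp.2 h) _ (EM.mem_supp.2 h') rfl
  have h2 := congrArg Prod.fst this
  simp only [ve_fst] at h2
  have : g⁻¹ = 1 := by simpa using h2
  simpa using this

/-- The quotient of the Milnor complex. -/
def BM (G : Type) [Group G] : Type := Quotient (MulAction.orbitRel G (EM G))

instance : TopologicalSpace (BM G) :=
  inferInstanceAs (TopologicalSpace (Quotient (MulAction.orbitRel G (EM G))))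

/-- projection -/
def prj (x : EM G) : BM G := Quotient.mk (MulAction.orbitRel G (EM G)) x

theorem prj_eq {x y : EM G} : prj x = prj y ↔ ∃ g : G, g • y = x := by
  exact (Quotient.eq (r := MulAction.orbitRel G (EM G)))

theorem prj_cov : IsQuotientCoveringMap (prj : EM G → BM G) G where
  toIsQuotientMap := isQuotientMap_quot_mk
  toContinuousConstSMul := inferInstance
  apply_eq_iff_mem_orbit := prj_eq
  disjoint x := by
    obtain ⟨p, hp⟩ := x.supp_nonempty
    refine ⟨{y | 0 < y.val p}, (isOpen_lt continuous_const (continuous_coord p)).mem_nhds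
      (EM.pos_of_mem hp), ?_⟩
    rintro g ⟨_, ⟨y, hy, rfl⟩, hy'⟩
    exact eq_one_of_slice (ne_of_gt hy) (ne_of_gt hy')

theorem prj_smul (g : G) (x : EM G) : prj (g • x) = prj x := prj_eq.2 ⟨g, rfl⟩

/-- colour weights -/
def tcol (n : ℕ) (x : EM G) : ℝ := ∑ p ∈ x.supp, (if p.2 = n then 1 else 0) * x.val p

theorem tcol_cont (n : ℕ) : Continuous (tcol (G := G) n) :=
  continuous_weight (fun k => if k = n then 1 else 0)

theorem tcol_smul (n : ℕ) (g : G) (x : EM G) : tcol n (g • x) = tcol n x := by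
  unfold tcol
  rw [supp_smul, vs, Finset.sum_map]
  refine Finset.sum_congr rfl fun p _ => ?_
  simp only [Equiv.coe_toEmbedding, ve_snd, smul_val, ve_mul]
  congr 2
  simp [ve]

theorem tcol_pos {n : ℕ} {x : EM G} {p : G × ℕ} (hp : p ∈ x.supp) (hn : p.2 = n) :
    0 < tcol n x := by
  refine lt_of_lt_of_le (EM.pos_of_mem hp) ?_
  have := Finset.single_le_sum (f := fun p : G × ℕ => (if p.2 = n then 1 else 0) * x.val p)
      (fun q _ => mul_nonneg (by split_ifs <;> norm_num) (x.nonneg q)) hp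
  simpa [hn, tcol] using this

theorem exists_of_tcol_pos {n : ℕ} {x : EM G} (h : 0 < tcol n x) : ∃ a : G, 0 < x.val (a, n) := by
  by_contra hcon
  push Not at hcon
  refine absurd h (not_lt.2 (Finset.sum_nonpos fun p _ => ?_))
  split_ifs with hp
  · have := hcon p.1
    rw [← hp] at this
    simpa using this
  · simp

instance : T2Space (BM G) := by
  refine ⟨fun X Y hXY => ?_⟩
  obtain ⟨x, rfl⟩ := prj_cov.surjective X
  obtain ⟨y, rfl⟩ := prj_cov.surjective Y
  have hq : ∀ n, Continuous (Quotient.lift (s := MulAction.orbitRel G (EM G)) (tcol (G := G) n)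
      (by rintro a b ⟨g, rfl⟩; exact tcol_smul n g b)) := fun n => (tcol_cont n).quotient_lift _
  by_cases ht : ∀ n, tcol n x = tcol n y
  · obtain ⟨p, hp⟩ := x.supp_nonempty
    have hy := tcol_pos hp rfl
    rw [ht] at hy
    obtain ⟨a, ha⟩ := exists_of_tcol_pos hy
    -- move y so that its colour-p.2 label is that of p
    set y' := (p.1 * a⁻¹) • y with hy'
    have hy'p : 0 < y'.val p := by
      rw [hy', smul_val]
      convert ha using 2
      ext <;> simp
    have hyy : prj y' = prj y := prj_smul _ _
    rw [← hyy] at hXY ⊢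
    have hne : x ≠ y' := fun h => hXY (by rw [h])
    obtain ⟨U, V, hU, hV, hxU, hyV, hd⟩ := t2_separation hne
    have hW : IsOpen {z : EM G | 0 < z.val p} := isOpen_lt continuous_const (continuous_coord p)
    have hop := prj_cov (G := G) |>.isOpenQuotientMap.isOpenMap
    refine ⟨prj '' (U ∩ {z | 0 < z.val p}), prj '' (V ∩ {z | 0 < z.val p}), hop _ (hU.inter hW),
      hop _ (hV.inter hW), ⟨x, ⟨hxU, EM.pos_of_mem hp⟩, rfl⟩, ⟨y', ⟨hyV, hy'p⟩, rfl⟩, ?_⟩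
    rw [Set.disjoint_left]
    rintro _ ⟨u, ⟨huU, huW⟩, rfl⟩ ⟨v, ⟨hvV, hvW⟩, hvu⟩
    obtain ⟨g, rfl⟩ := prj_eq.1 hvu
    have : g = 1 := eq_one_of_slice (a := p.1) (n := p.2) (ne_of_gt huW) (ne_of_gt hvW)
    subst this
    rw [one_smul] at hvV
    exact Set.disjoint_left.1 hd huU hvV
  · push Not at ht
    obtain ⟨n, hn⟩ := ht
    exact separated_by_continuous (hq n) hn

end Mil

namespace Mil
set_option linter.unusedSectionVars false
open scoped Classical

variable {S : Type} 

/-- corner simplex -/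
def Tri (m : ℕ) : Set (Fin m → ℝ) := {y | (∀ i, 0 ≤ y i) ∧ ∑ i, y i ≤ 1}

theorem interior_Tri (m : ℕ) : interior (Tri m) = {y | (∀ i, 0 < y i) ∧ ∑ i, y i < 1} := by
  apply Set.Subset.antisymm
  · intro y hy
    have hn : Tri m ∈ 𝓝 y := mem_interior_iff_mem_nhds.1 hy
    have hyT := interior_subset hy
    constructor
    · intro i
      have hc : Filter.Tendsto (fun ε : ℝ => y - ε • (fun _ => (1:ℝ))) (𝓝[>] 0) (𝓝 y) := by
        have : Continuous (fun ε : ℝ => y - ε • (fun _ : Fin m => (1:ℝ))) := by fun_prop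
        have h2 := this.tendsto 0
        simp only [zero_smul, sub_zero] at h2
        exact h2.mono_left nhdsWithin_le_nhds
      obtain ⟨ε, h1, h2⟩ := ((hc.eventually hn).and self_mem_nhdsWithin).exists
      have h3 := h1.1 i
      simp only [Pi.sub_apply, Pi.smul_apply, smul_eq_mul, mul_one] at h3
      have : (0:ℝ) < ε := h2
      linarith
    · refine lt_of_le_of_ne hyT.2 fun he => ?_
      have hc : Filter.Tendsto (fun ε : ℝ => (1 + ε) • y) (𝓝[>] 0) (𝓝 y) := by
        have : Continuous (fun ε : ℝ => (1 + ε) • y) := by fun_prop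
        have h2 := this.tendsto 0
        simp only [add_zero, one_smul] at h2
        exact h2.mono_left nhdsWithin_le_nhds
      obtain ⟨ε, h1, h2⟩ := ((hc.eventually hn).and self_mem_nhdsWithin).exists
      have h3 := h1.2
      simp only [Pi.smul_apply, smul_eq_mul, ← Finset.mul_sum, he] at h3
      have : (0:ℝ) < ε := h2
      linarith
  · refine interior_maximal (fun y hy => ⟨fun i => (hy.1 i).le, hy.2.le⟩) ?_
    have : {y : Fin m → ℝ | (∀ i, 0 < y i) ∧ ∑ i, y i < 1} =
        (⋂ i, {y | 0 < y i}) ∩ {y | ∑ i, y i < 1} := by ext; simp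
    rw [this]
    refine (isOpen_iInter_of_finite fun i => isOpen_lt continuous_const (continuous_apply i)).inter
      (isOpen_lt (by fun_prop) continuous_const)

theorem isClosed_Tri (m : ℕ) : IsClosed (Tri m) := by
  have : Tri m = (⋂ i, {y | 0 ≤ y i}) ∩ {y | ∑ i, y i ≤ 1} := by ext; simp [Tri]
  rw [this]
  exact (isClosed_iInter fun i => isClosed_le continuous_const (continuous_apply i)).inter
      (isClosed_le (by fun_prop) continuous_const)

theorem convex_Tri (m : ℕ) : Convex ℝ (Tri m) := by
  intro x hx y hy a b ha hb hab
  refine ⟨fun i => add_nonneg (mul_nonneg ha (hx.1 i)) (mul_nonneg hb (hy.1 i)), ?_⟩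
  simp only [Pi.add_apply, Pi.smul_apply, smul_eq_mul, Finset.sum_add_distrib, ← Finset.mul_sum]
  nlinarith [hx.2, hy.2]

theorem Tri_bdd (m : ℕ) : Bornology.IsBounded (Tri m) := by
  refine (Metric.isBounded_closedBall (x := (0 : Fin m → ℝ)) (r := 1)).subset fun y hy => ?_
  rw [mem_closedBall_zero_iff, pi_norm_le_iff_of_nonneg zero_le_one]
  intro i
  rw [Real.norm_of_nonneg (hy.1 i)]
  exact (Finset.single_le_sum (f := y) (fun q _ => hy.1 q) (Finset.mem_univ i)).trans hy.2

/-- closed simplices are closed balls -/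
theorem simplexHomeo {V : Type*} [NormedAddCommGroup V] [NormedSpace ℝ V] {m : ℕ}
    (L : V ≃L[ℝ] (Fin m → ℝ)) {s : Finset (S × ℕ)} (hs : s.card = m + 1) :
    ∃ h : Metric.closedBall (0 : V) 1 ≃ₜ Spx s,
      ∀ z : Metric.closedBall (0 : V) 1, ‖(z : V)‖ < 1 ↔ ∀ p ∈ s, 0 < (h z).1 p := by
  have hAc : IsClosed (L ⁻¹' Tri m) := (isClosed_Tri m).preimage L.continuous
  have hint : interior (L ⁻¹' Tri m) = L ⁻¹' interior (Tri m) :=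
    (L.toHomeomorph.preimage_interior _).symm
  obtain ⟨k, hk1, hk2, -⟩ := exists_homeomorph_image_interior_closure_frontier_eq_unitBall
    (s := L ⁻¹' Tri m) ((convex_Tri m).linear_preimage L.toLinearEquiv.toLinearMap)
    (by
      rw [hint, interior_Tri]
      refine ⟨L.symm (fun _ => 1 / (m + 1 : ℝ)), ?_⟩
      simp only [Set.mem_preimage, ContinuousLinearEquiv.apply_symm_apply, Set.mem_ofPred_eq,
        Finset.sum_const, Finset.card_univ, Fintype.card_fin, nsmul_eq_mul]
      refine ⟨fun _ => by positivity, ?_⟩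
      rw [mul_one_div, div_lt_one (by positivity)]
      linarith)
    (by
      have := L.symm.lipschitz.isBounded_image (Tri_bdd m)
      refine this.subset fun x hx => ⟨L x, hx, by simp⟩)
  rw [hAc.closure_eq] at hk2
  rw [hint, interior_Tri] at hk1
  have e : s ≃ Fin (m + 1) := Fintype.equivFinOfCardEq (by simpa using hs)
  have hsum : ∀ x : S × ℕ → ℝ, ∑ p ∈ s, x p = x (e.symm 0) + ∑ i : Fin m, x (e.symm i.succ) := by
    intro x
    rw [← Finset.sum_coe_sort, ← e.symm.sum_comp, Fin.sum_univ_succ]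
  let fwd : (Fin m → ℝ) → S × ℕ → ℝ := fun y p =>
    if hp : p ∈ s then Fin.cons (α := fun _ => ℝ) (1 - ∑ i, y i) y (e ⟨p, hp⟩) else 0
  have hf0 : ∀ y, fwd y (e.symm 0) = 1 - ∑ i, y i := fun y => by simp [fwd]
  have hfs : ∀ y (i : Fin m), fwd y (e.symm i.succ) = y i := fun y i => by simp [fwd]
  have hcases : ∀ p ∈ s, p = e.symm 0 ∨ ∃ i : Fin m, p = e.symm i.succ := by
    intro p hp
    rcases Fin.eq_zero_or_eq_succ (e ⟨p, hp⟩) with h | ⟨i, h⟩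
    · left; rw [← h]; simp
    · right; exact ⟨i, by rw [← h]; simp⟩
  have hfc : Continuous fwd := by
    refine continuous_pi fun p => ?_
    by_cases hp : p ∈ s
    · rcases hcases p hp with h | ⟨i, h⟩
      · rw [h]; simp only [hf0]; fun_prop
      · rw [h]; simp only [hfs]; fun_prop
    · simp only [fwd, dif_neg hp]; exact continuous_const
  have hkT : ∀ z : Metric.closedBall (0 : V) 1, L (k.symm z) ∈ Tri m := by
    intro z
    obtain ⟨a, ha, hz⟩ := hk2.symm.subset z.2
    rw [← hz]; simpa using ha
  have hTk : ∀ y ∈ Tri m, k (L.symm y) ∈ Metric.closedBall (0 : V) 1 := by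
    intro y hy
    rw [← hk2]
    exact ⟨_, by simpa using hy, rfl⟩
  have hfT : ∀ y ∈ Tri m, fwd y ∈ Spx s := by
    intro y hy
    refine ⟨fun p => ?_, fun p hp => dif_neg hp, ?_⟩
    · by_cases hp : p ∈ s
      · rcases hcases p hp with h | ⟨i, h⟩
        · rw [h, hf0]; linarith [hy.2]
        · rw [h, hfs]; exact hy.1 i
      · simp [fwd, hp]
    · rw [hsum, hf0]; simp only [hfs]; ring
  have hbT : ∀ x ∈ Spx s, (fun i : Fin m => x (e.symm i.succ)) ∈ Tri m := by
    intro x hx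
    refine ⟨fun i => hx.1 _, ?_⟩
    have := hx.2.2
    rw [hsum] at this
    have := hx.1 (e.symm 0)
    linarith
  refine ⟨{
    toFun := fun z => ⟨fwd (L (k.symm z)), hfT _ (hkT z)⟩
    invFun := fun x => ⟨k (L.symm fun i => x.1 (e.symm i.succ)), hTk _ (hbT _ x.2)⟩
    left_inv := fun z => by
      apply Subtype.ext
      simp only [hfs]
      simp
    right_inv := fun x => by
      apply Subtype.ext
      simp only [Homeomorph.symm_apply_apply, ContinuousLinearEquiv.apply_symm_apply]
      funext p
      by_cases hp : p ∈ s
      · rcases hcases p hp with h | ⟨i, h⟩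
        · rw [h, hf0]
          have := x.2.2.2
          rw [hsum] at this
          linarith
        · rw [h, hfs]
      · simp only [fwd, dif_neg hp]
        exact (x.2.2.1 p hp).symm
    continuous_toFun := by
      refine Continuous.subtype_mk ?_ _
      exact hfc.comp (L.continuous.comp (k.symm.continuous.comp continuous_subtype_val))
    continuous_invFun := by
      refine Continuous.subtype_mk ?_ _
      refine k.continuous.comp (L.symm.continuous.comp (continuous_pi fun i => ?_))
      exact (continuous_apply _).comp continuous_subtype_val }, ?_⟩
  intro z
  change _ ↔ ∀ p ∈ s, 0 < fwd (L (k.symm z)) p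
  have : ‖(z : V)‖ < 1 ↔ L (k.symm z) ∈ {y : Fin m → ℝ | (∀ i, 0 < y i) ∧ ∑ i, y i < 1} := by
    rw [← mem_ball_zero_iff, ← hk1]
    constructor
    · rintro ⟨a, ha, hz⟩
      rw [← hz]; simpa using ha
    · intro h
      exact ⟨k.symm z, h, by simp⟩
  rw [this]
  constructor
  · rintro ⟨h1, h2⟩ p hp
    rcases hcases p hp with h | ⟨i, h⟩
    · rw [h, hf0]; linarith
    · rw [h, hfs]; exact h1 i
  · intro h
    refine ⟨fun i => ?_, ?_⟩
    · have := h (e.symm i.succ) (e.symm i.succ).2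
      rwa [hfs] at this
    · have := h (e.symm 0) (e.symm 0).2
      rw [hf0] at this
      linarith

end Mil

namespace Mil
set_option linter.unusedSectionVars false
open scoped Classical

variable {S : Type} {G : Type} [Group G]

theorem exists_minv (s : Finset (S × ℕ)) (h : s.Nonempty) : ∃ p ∈ s, ∀ q ∈ s, p.2 ≤ q.2 :=
  s.exists_min_image Prod.snd h

/-- the label of the vertex of least colour -/
def lab (s : Finset (G × ℕ)) : G := if h : s.Nonempty then (exists_minv s h).choose.1 else 1

theorem lab_eq {s : Finset (G × ℕ)} (hs : Chn s) {p : G × ℕ} (hp : p ∈ s)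
    (hm : ∀ q ∈ s, p.2 ≤ q.2) : lab s = p.1 := by
  have h : s.Nonempty := ⟨p, hp⟩
  rw [lab, dif_pos h]
  have := (exists_minv s h).choose_spec
  rw [hs _ this.1 _ hp (le_antisymm (this.2 _ hp) (hm _ this.1))]

theorem lab_vs {s : Finset (G × ℕ)} (hs : Chn s) (hne : s.Nonempty) (g : G) :
    lab (vs g s) = g * lab s := by
  obtain ⟨p, hp, hm⟩ := exists_minv s hne
  rw [lab_eq hs hp hm, lab_eq (chn_vs hs) (ve_mem_vs (g := g) hp), ve_fst]
  intro q hq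
  have := hm _ (mem_vs.1 hq)
  simpa using this

theorem vs_nonempty {s : Finset (G × ℕ)} (g : G) (hne : s.Nonempty) : (vs g s).Nonempty := by
  obtain ⟨p, hp⟩ := hne
  exact ⟨_, ve_mem_vs hp⟩

/-- cells of the quotient -/
def BCell (G : Type) [Group G] (n : ℕ) : Type :=
  {s : Finset (G × ℕ) // Chn s ∧ s.card = n + 1 ∧ lab s = 1}

/-- parametrisation of the cells -/
def cellHomeo {n : ℕ} (s : BCell G n) : Metric.closedBall (0 : EuclideanSpace ℝ (Fin n)) 1 ≃ₜ Spx s.1 :=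
  (simplexHomeo (EuclideanSpace.equiv (Fin n) ℝ) s.2.2.1).choose

theorem cellHomeo_spec {n : ℕ} (s : BCell G n) (z : Metric.closedBall (0 : EuclideanSpace ℝ (Fin n)) 1) :
    ‖(z : EuclideanSpace ℝ (Fin n))‖ < 1 ↔ ∀ p ∈ s.1, 0 < (cellHomeo s z).1 p :=
  (simplexHomeo (EuclideanSpace.equiv (Fin n) ℝ) s.2.2.1).choose_spec z

/-- cells upstairs -/
def cellUp {n : ℕ} (s : BCell G n) (z : Metric.closedBall (0 : EuclideanSpace ℝ (Fin n)) 1) : EM G :=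
  inc ⟨s.1, s.2.1⟩ (cellHomeo s z)

theorem cellUp_supp {n : ℕ} (s : BCell G n) (z : Metric.closedBall (0 : EuclideanSpace ℝ (Fin n)) 1) :
    (cellUp s z).supp ⊆ s.1 := supp_inc_subset (s := ⟨s.1, s.2.1⟩) (cellHomeo s z)

theorem cellUp_supp_eq {n : ℕ} (s : BCell G n) (z : Metric.closedBall (0 : EuclideanSpace ℝ (Fin n)) 1) :
    ‖(z : EuclideanSpace ℝ (Fin n))‖ < 1 ↔ (cellUp s z).supp = s.1 := by
  rw [cellHomeo_spec s z]
  constructor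
  · intro h
    refine Finset.Subset.antisymm (cellUp_supp s z) fun p hp => EM.mem_supp.2 (ne_of_gt (h p hp))
  · intro h p hp
    rw [← h] at hp
    exact EM.pos_of_mem hp

theorem exists_cell (x : EM G) : ∃ (n : ℕ) (s : BCell G n)
    (w : Metric.closedBall (0 : EuclideanSpace ℝ (Fin n)) 1), n + 1 = x.supp.card ∧
    ‖(w : EuclideanSpace ℝ (Fin n))‖ < 1 ∧ prj (cellUp s w) = prj x := by
  obtain ⟨n, hn⟩ : ∃ n, x.supp.card = n + 1 :=
    Nat.exists_eq_succ_of_ne_zero (Finset.card_pos.2 x.supp_nonempty).ne'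
  set g := (lab x.supp)⁻¹ with hg
  let s : BCell G n := ⟨(g • x).supp, (g • x).supp_chn, by rw [supp_smul, card_vs, hn], by
    rw [supp_smul, lab_vs x.supp_chn x.supp_nonempty, hg, inv_mul_cancel]⟩
  have hx : (g • x).val ∈ Spx s.1 := EM.mem_Spx_iff.2 (subset_refl _)
  have hw : cellUp s ((cellHomeo s).symm ⟨_, hx⟩) = g • x := by
    unfold cellUp
    rw [Homeomorph.apply_symm_apply]
    rfl
  refine ⟨n, s, (cellHomeo s).symm ⟨_, hx⟩, hn.symm, ?_, ?_⟩
  · exact (cellUp_supp_eq s _).2 (by rw [hw])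
  · rw [hw, prj_smul]

theorem cell_unique (p q : Σ (n : ℕ) (_ : BCell G n), Metric.closedBall (0 : EuclideanSpace ℝ (Fin n)) 1)
    (hp : ‖(p.2.2 : EuclideanSpace ℝ (Fin p.1))‖ < 1) (hq : ‖(q.2.2 : EuclideanSpace ℝ (Fin q.1))‖ < 1)
    (h : prj (cellUp p.2.1 p.2.2) = prj (cellUp q.2.1 q.2.2)) : p = q := by
  obtain ⟨n, s, z⟩ := p
  obtain ⟨n', s', z'⟩ := q
  simp only at hp hq h
  obtain ⟨g, hg⟩ := prj_eq.1 h
  have h1 := (cellUp_supp_eq s z).1 hp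
  have h2 := (cellUp_supp_eq s' z').1 hq
  have hne : s'.1.Nonempty := by rw [← h2]; exact EM.supp_nonempty _
  have h3 : s.1 = vs g s'.1 := by rw [← h1, ← hg, supp_smul, h2]
  have h4 : g = 1 := by
    have := s.2.2.2
    rw [h3, lab_vs s'.2.1 hne, s'.2.2.2, mul_one] at this
    exact this
  subst h4
  rw [vs_one] at h3
  rw [one_smul] at hg
  have hn : n = n' := by
    have e1 := s.2.2.1
    have e2 := s'.2.2.1
    rw [h3] at e1
    omega
  subst hn
  obtain rfl : s = s' := Subtype.ext h3
  have : z = z' := by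
    apply (cellHomeo s).injective
    apply Subtype.ext
    exact congrArg EM.val hg.symm
  rw [this]

/-- The CW structure on the quotient. -/
def bmCW (G : Type) [Group G] : CWStructure (BM G) where
  t2 := inferInstance
  cells := BCell G
  charMap n s z := prj (cellUp s z)
  charMap_continuous n s :=
    prj_cov.continuous.comp ((continuous_inc _).comp (cellHomeo s).continuous)
  sphere_le n s z hz := by
    obtain ⟨m, t, w, hm, hw, he⟩ := exists_cell (cellUp s z)
    refine ⟨m, ?_, t, w, hw, he⟩
    have hlt : (cellUp s z).supp ⊂ s.1 := by
      refine lt_of_le_of_ne (cellUp_supp s z) fun h => ?_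
      have := (cellUp_supp_eq s z).2 h
      linarith
    have := Finset.card_lt_card hlt
    have h2 := s.2.2.1
    omega
  partition X := by
    obtain ⟨x, rfl⟩ := prj_cov.surjective X
    obtain ⟨m, t, w, hm, hw, he⟩ := exists_cell x
    refine ⟨⟨m, t, w⟩, ⟨hw, he⟩, ?_⟩
    rintro p ⟨hp, hpx⟩
    exact cell_unique p ⟨m, t, w⟩ hp hw (hpx.trans he.symm)
  weak_topology A := by
    constructor
    · intro hA n s
      exact hA.preimage (prj_cov.continuous.comp ((continuous_inc _).comp (cellHomeo s).continuous))
    · intro h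
      rw [← prj_cov.isClosed_preimage, isClosed_iff_inc]
      rintro ⟨s, hs⟩
      by_cases hne : s.Nonempty
      · obtain ⟨n, hn⟩ : ∃ n, s.card = n + 1 :=
          Nat.exists_eq_succ_of_ne_zero (Finset.card_pos.2 hne).ne'
        set g := (lab s)⁻¹ with hg
        let t : BCell G n := ⟨vs g s, chn_vs hs, by rw [card_vs, hn], by
          rw [lab_vs hs hne, hg, inv_mul_cancel]⟩
        have h1 := (h n t).preimage (cellHomeo t).symm.continuous
        have hc : Continuous (fun x : Spx s => (⟨fun p => x.1 (ve g⁻¹ p), spx_vs x.2⟩ : Spx t.1)) := by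
          refine Continuous.subtype_mk ?_ _
          exact continuous_pi fun p => (continuous_apply _).comp continuous_subtype_val
        have h2 := h1.preimage hc
        convert h2 using 1
        ext x
        change prj (inc ⟨s, hs⟩ x) ∈ A ↔ prj (inc ⟨t.1, t.2.1⟩ ((cellHomeo t) ((cellHomeo t).symm _))) ∈ A
        rw [← prj_smul g (inc ⟨s, hs⟩ x), Homeomorph.apply_symm_apply]
        rfl
      · rw [Finset.not_nonempty_iff_eq_empty] at hne
        subst hne
        have : IsEmpty (Spx (∅ : Finset (G × ℕ))) := ⟨fun x => by simpa using x.2.2.2⟩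
        convert isClosed_empty
        exact Set.eq_empty_of_isEmpty _

end Mil

namespace Mil
set_option linter.unusedSectionVars false
open scoped Classical

/-- homotopy extension for the ball -/
theorem collar {V : Type*} [NormedAddCommGroup V] [NormedSpace ℝ V] {Z : Type*}
    [TopologicalSpace Z] (H : ℝ × V → Z)
    (hH : ContinuousOn H (Set.Icc 0 1 ×ˢ Metric.sphere 0 1)) (F1 : V → Z)
    (h1 : ContinuousOn F1 (Metric.closedBall 0 1))
    (hag : ∀ x ∈ Metric.sphere (0 : V) 1, H (1, x) = F1 x) :
    ∃ F : V → Z, ContinuousOn F (Metric.closedBall 0 1) ∧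
      ∀ x ∈ Metric.sphere (0 : V) 1, F x = H (0, x) := by
  refine ⟨fun x => if ‖x‖ ≤ 1 / 2 then F1 ((2 : ℝ) • x) else H (2 - 2 * ‖x‖, ‖x‖⁻¹ • x), ?_, ?_⟩
  · have hcov : Metric.closedBall (0 : V) 1 =
        Metric.closedBall 0 (1 / 2) ∪ {x | 1 / 2 ≤ ‖x‖ ∧ ‖x‖ ≤ 1} := by
      ext x
      simp only [Metric.mem_closedBall, dist_zero_right, Set.mem_union, Set.mem_ofPred_eq]
      constructor
      · intro h
        rcases le_total ‖x‖ (1 / 2) with h' | h'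
        · exact Or.inl h'
        · exact Or.inr ⟨h', h⟩
      · rintro (h | h)
        · linarith
        · exact h.2
    rw [hcov]
    refine ContinuousOn.union_of_isClosed ?_ ?_ Metric.isClosed_closedBall ?_
    · have : ContinuousOn (fun x : V => F1 ((2 : ℝ) • x)) (Metric.closedBall 0 (1 / 2)) := by
        refine h1.comp (by fun_prop) fun x hx => ?_
        rw [mem_closedBall_zero_iff] at hx ⊢
        rw [norm_smul, Real.norm_of_nonneg (by norm_num)]
        linarith
      refine this.congr fun x hx => ?_
      rw [mem_closedBall_zero_iff] at hx
      simp only [if_pos hx]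
    · have : ContinuousOn (fun x : V => H (2 - 2 * ‖x‖, ‖x‖⁻¹ • x)) {x | 1 / 2 ≤ ‖x‖ ∧ ‖x‖ ≤ 1} := by
        refine hH.comp ?_ fun x hx => ?_
        · refine ContinuousOn.prodMk (by fun_prop) (ContinuousOn.smul (ContinuousOn.inv₀ (by fun_prop) ?_) (by fun_prop))
          intro x hx
          have : (0:ℝ) < ‖x‖ := by linarith [hx.1]
          exact this.ne'
        · have : (0:ℝ) < ‖x‖ := by linarith [hx.1]
          refine ⟨⟨by linarith [hx.2], by linarith [hx.1]⟩, ?_⟩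
          rw [mem_sphere_zero_iff_norm, norm_smul, norm_inv, norm_norm, inv_mul_cancel₀ this.ne']
      refine this.congr fun x hx => ?_
      by_cases h : ‖x‖ ≤ 1 / 2
      · have he : ‖x‖ = 1 / 2 := le_antisymm h hx.1
        simp only [if_pos h]
        have : (2 : ℝ) • x ∈ Metric.sphere (0 : V) 1 := by
          rw [mem_sphere_zero_iff_norm, norm_smul, he]; norm_num
        rw [← hag _ this, he]
        norm_num
      · simp only [if_neg h]
    · have : {x : V | 1 / 2 ≤ ‖x‖ ∧ ‖x‖ ≤ 1} = {x | 1 / 2 ≤ ‖x‖} ∩ {x | ‖x‖ ≤ 1} := rfl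
      rw [this]
      exact (isClosed_le continuous_const continuous_norm).inter
        (isClosed_le continuous_norm continuous_const)
  · intro x hx
    rw [mem_sphere_zero_iff_norm] at hx
    simp only [hx]
    norm_num

theorem continuousOn_dite {V Z : Type*} [TopologicalSpace V] [TopologicalSpace Z] {A : Set V}
    {f : A → Z} (hf : Continuous f) (z : Z) :
    ContinuousOn (fun x => if h : x ∈ A then f ⟨x, h⟩ else z) A := by
  rw [continuousOn_iff_continuous_domRestrict]
  convert hf using 1
  funext x
  simp

theorem extend_of_homotopic {V : Type*} [NormedAddCommGroup V] [NormedSpace ℝ V] {Z : Type*}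
    [TopologicalSpace Z] {f f' : C(Metric.sphere (0 : V) 1, Z)} (h : f.Homotopic f')
    (F' : C(Metric.closedBall (0 : V) 1, Z))
    (hF' : ∀ x (hx : x ∈ Metric.sphere (0 : V) 1),
      F' ⟨x, Metric.sphere_subset_closedBall hx⟩ = f' ⟨x, hx⟩) :
    ∃ F : C(Metric.closedBall (0 : V) 1, Z), ∀ x (hx : x ∈ Metric.sphere (0 : V) 1),
      F ⟨x, Metric.sphere_subset_closedBall hx⟩ = f ⟨x, hx⟩ := by
  obtain ⟨h⟩ := h
  let z0 : Z := F' ⟨0, by simp⟩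
  let H : ℝ × V → Z := fun p => if hp : p.2 ∈ Metric.sphere (0 : V) 1 then
    h (Set.projIcc 0 1 zero_le_one p.1, ⟨p.2, hp⟩) else z0
  let F1 : V → Z := fun x => if hx : x ∈ Metric.closedBall (0 : V) 1 then F' ⟨x, hx⟩ else z0
  obtain ⟨F, hF, hFs⟩ := collar H (by
      rw [continuousOn_iff_continuous_domRestrict]
      have : (Set.Icc (0:ℝ) 1 ×ˢ Metric.sphere (0 : V) 1).domRestrict H = fun p =>
          h (Set.projIcc 0 1 zero_le_one p.1.1, ⟨p.1.2, p.2.2⟩) := by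
        funext p
        simp only [Set.domRestrict_apply, H]
        exact dif_pos p.2.2
      rw [this]
      refine h.continuous.comp (Continuous.prodMk ?_ ?_)
      · exact continuous_projIcc.comp (continuous_fst.comp continuous_subtype_val)
      · exact Continuous.subtype_mk (continuous_snd.comp continuous_subtype_val) _)
    F1 (continuousOn_dite F'.continuous z0) (by
      intro x hx
      simp only [H, F1, dif_pos hx, dif_pos (Metric.sphere_subset_closedBall hx)]
      rw [hF' x hx]
      simp)
  refine ⟨⟨_, continuousOn_iff_continuous_domRestrict.1 hF⟩, fun x hx => ?_⟩
  change F x = _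
  rw [hFs x hx]
  simp only [H, dif_pos hx]
  simp

theorem extend_of_null {V : Type*} [NormedAddCommGroup V] [NormedSpace ℝ V] {Z : Type*}
    [TopologicalSpace Z] {f : C(Metric.sphere (0 : V) 1, Z)} (h : f.Nullhomotopic) :
    ∃ F : C(Metric.closedBall (0 : V) 1, Z), ∀ x (hx : x ∈ Metric.sphere (0 : V) 1),
      F ⟨x, Metric.sphere_subset_closedBall hx⟩ = f ⟨x, hx⟩ := by
  obtain ⟨z, hz⟩ := h
  exact extend_of_homotopic hz (ContinuousMap.const _ z) fun x hx => rfl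

theorem null_of_contractible {K Z : Type*} [TopologicalSpace K] [TopologicalSpace Z]
    [ContractibleSpace Z] (f : C(K, Z)) : f.Nullhomotopic := by
  obtain ⟨z, hz⟩ := id_nullhomotopic Z
  refine ⟨z, ?_⟩
  have := ContinuousMap.Homotopic.comp hz (ContinuousMap.Homotopic.refl f)
  exact this

variable {S : Type}

theorem continuousOn_of_inc {Z : Type*} [TopologicalSpace Z] {A : Set (EM S)} (hA : IsClosed A)
    {f : EM S → Z} (h : ∀ s, ContinuousOn (fun x => f (inc s x)) (inc s ⁻¹' A)) :
    ContinuousOn f A := by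
  rw [continuousOn_iff_isClosed]
  intro t ht
  refine ⟨f ⁻¹' t ∩ A, ?_, by rw [Set.inter_assoc, Set.inter_self]⟩
  rw [isClosed_iff_inc]
  intro s
  have := (h s).preimage_isClosed_of_isClosed (hA.preimage (continuous_inc s)) ht
  rw [Set.inter_comm] at this
  exact this

/-- points with colours below N -/
def low (N : ℕ) : Set (EM S) := {x | ∀ p ∈ x.supp, p.2 < N}

theorem isClosed_low (N : ℕ) : IsClosed (low (S := S) N) := by
  have : low (S := S) N = ⋂ p : S × ℕ, {x | N ≤ p.2 → x.val p = 0} := by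
    ext x
    simp only [low, Set.mem_ofPred_eq, EM.mem_supp, Set.mem_iInter]
    refine forall_congr' fun p => ?_
    rw [← not_imp_not, not_not, not_lt]
  rw [this]
  refine isClosed_iInter fun p => ?_
  by_cases h : N ≤ p.2
  · simpa [h] using isClosed_eq (continuous_coord p) continuous_const
  · simp [h]

/-- cone coordinates -/
def coneVal (w : S × ℕ) (t : ℝ) (x : S × ℕ → ℝ) : S × ℕ → ℝ :=
  fun p => (1 - t) * x p + t * (if p = w then 1 else 0)

theorem coneVal_mem {w : S × ℕ} {t : ℝ} (h0 : 0 ≤ t) (h1 : t ≤ 1) {s : Finset (S × ℕ)}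
    (hw : w ∉ s) {x : S × ℕ → ℝ} (hx : x ∈ Spx s) : coneVal w t x ∈ Spx (insert w s) := by
  refine ⟨fun p => ?_, fun p hp => ?_, ?_⟩
  · refine add_nonneg (mul_nonneg (by linarith) (hx.1 p)) (mul_nonneg h0 (by split_ifs <;> norm_num))
  · simp only [Finset.mem_insert, not_or] at hp
    simp [coneVal, hp.1, hx.2.1 p hp.2]
  · rw [Finset.sum_insert hw]
    have : ∑ p ∈ s, coneVal w t x p = (1 - t) * ∑ p ∈ s, x p := by
      rw [Finset.mul_sum]
      refine Finset.sum_congr rfl fun p hp => ?_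
      have : p ≠ w := fun h => hw (h ▸ hp)
      simp [coneVal, this]
    rw [this, hx.2.2]
    simp [coneVal, hx.2.1 w hw]

theorem chn_insert {a : S} {N : ℕ} {s : Finset (S × ℕ)} (hs : Chn s) (hN : ∀ p ∈ s, p.2 < N) :
    Chn (insert (a, N) s) := by
  intro p hp q hq e
  rw [Finset.mem_insert] at hp hq
  rcases hp with rfl | hp <;> rcases hq with rfl | hq
  · rfl
  · have := hN q hq; simp only at e; omega
  · have := hN p hp; simp only at e; omega
  · exact hs p hp q hq e

theorem notin_of_low {a : S} {N : ℕ} {s : Finset (S × ℕ)} (hN : ∀ p ∈ s, p.2 < N) :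
    (a, N) ∉ s := fun h => lt_irrefl _ (hN _ h)

/-- the cone as a map -/
def coneMap (a : S) (N : ℕ) (x : EM S) (hx : x ∈ low N) (t : unitInterval) : EM S :=
  ⟨coneVal (a, N) t x.val, insert (a, N) x.supp, chn_insert x.supp_chn hx,
    coneVal_mem t.2.1 t.2.2 (notin_of_low hx) (EM.mem_Spx_iff.2 (subset_refl _))⟩

theorem coneMap_cont_inc (a : S) (N : ℕ) (s : {s : Finset (S × ℕ) // Chn s}) :
    Continuous (fun q : (inc s ⁻¹' low N : Set (Spx s.1)) × unitInterval =>
      coneMap a N (inc s q.1.1) q.1.2 q.2) := by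
  let s' := s.1.filter (fun p => p.2 < N)
  have hs' : ∀ p ∈ s', p.2 < N := fun p hp => (Finset.mem_filter.1 hp).2
  let s'' : {s : Finset (S × ℕ) // Chn s} :=
    ⟨insert (a, N) s', chn_insert (s.2.mono (Finset.filter_subset _ _)) hs'⟩
  have hmem : ∀ q : (inc s ⁻¹' low N : Set (Spx s.1)), q.1.1 ∈ Spx s' := by
    intro q
    have : (inc s q.1).supp ⊆ s' := fun p hp =>
      Finset.mem_filter.2 ⟨supp_inc_subset _ hp, q.2 p hp⟩
    exact EM.mem_Spx_iff.2 this
  have : (fun q : (inc s ⁻¹' low N : Set (Spx s.1)) × unitInterval =>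
      coneMap a N (inc s q.1.1) q.1.2 q.2) = fun q => inc s'' ⟨coneVal (a, N) q.2 q.1.1.1,
        coneVal_mem q.2.2.1 q.2.2.2 (notin_of_low hs') (hmem q.1)⟩ := rfl
  rw [this]
  refine (continuous_inc s'').comp (Continuous.subtype_mk (continuous_pi fun p => ?_) _)
  have h1 : Continuous (fun q : (inc s ⁻¹' low N : Set (Spx s.1)) × unitInterval => q.1.1.1 p) :=
    (continuous_apply p).comp
      (continuous_subtype_val.comp (continuous_subtype_val.comp continuous_fst))
  have h2 : Continuous (fun q : (inc s ⁻¹' low N : Set (Spx s.1)) × unitInterval => (q.2 : ℝ)) :=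
    continuous_subtype_val.comp continuous_snd
  exact ((continuous_const.sub h2).mul h1).add (h2.mul continuous_const)

theorem coneMap_cont (a : S) (N : ℕ) :
    Continuous (fun q : low (S := S) N × unitInterval => coneMap a N q.1.1 q.1.2 q.2) := by
  have hx : ∀ (x : EM S) (hx : x ∈ low N), Continuous (coneMap a N x hx) := by
    intro x hx
    have hxs : x.val ∈ Spx x.supp := EM.mem_Spx_iff.2 (subset_refl _)
    exact (coneMap_cont_inc a N ⟨x.supp, x.supp_chn⟩).comp
      (Continuous.prodMk (continuous_const (y := ⟨⟨x.val, hxs⟩, hx⟩)) continuous_id)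
  let c : EM S → C(unitInterval, EM S) := fun x => if h : x ∈ low N then ⟨coneMap a N x h, hx x h⟩
    else ContinuousMap.const _ x
  have hc : ContinuousOn c (low N) := by
    refine continuousOn_of_inc (isClosed_low N) fun s => ?_
    rw [continuousOn_iff_continuous_domRestrict]
    have : (inc s ⁻¹' low N : Set (Spx s.1)).domRestrict (fun x => c (inc s x)) =
        fun x => ContinuousMap.curry ⟨_, coneMap_cont_inc a N s⟩ x := by
      funext x
      have : inc s x.1 ∈ low N := x.2
      simp only [Set.domRestrict_apply, c, dif_pos this]
      rfl
    rw [this]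
    exact (ContinuousMap.curry _).continuous
  have h2 : Continuous (fun x : low (S := S) N => c x) := continuousOn_iff_continuous_domRestrict.1 hc
  have h3 := ContinuousMap.continuous_uncurry_of_continuous ⟨_, h2⟩
  convert h3 using 1
  funext q
  simp only [Function.uncurry, ContinuousMap.coe_mk, c, dif_pos q.1.2]

theorem null_of_compact [Nonempty S] {K : Type*} [TopologicalSpace K] [CompactSpace K]
    (f : C(K, EM S)) : f.Nullhomotopic := by
  obtain ⟨N, hN⟩ := exists_color_bound (isCompact_range f.continuous)
  have hl : ∀ k, f k ∈ low N := fun k => hN _ ⟨k, rfl⟩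
  obtain ⟨a⟩ := ‹Nonempty S›
  let w : EM S := ⟨fun p => if p = (a, N) then 1 else 0, {(a, N)}, by
    intro p hp q hq _
    rw [Finset.mem_singleton] at hp hq
    rw [hp, hq], by
    refine ⟨fun p => by dsimp only; split_ifs <;> norm_num, fun p hp => ?_, by simp⟩
    rw [Finset.mem_singleton] at hp
    simp [hp]⟩
  refine ⟨w, ⟨{ toFun := fun q => coneMap a N (f q.2) (hl _) q.1
                continuous_toFun := ?_
                map_zero_left := ?_
                map_one_left := ?_ }⟩⟩
  · exact (coneMap_cont a N).comp (Continuous.prodMk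
      (Continuous.subtype_mk (f.continuous.comp continuous_snd) (fun q => hl _)) continuous_fst)
  · intro k
    apply EM.ext'
    funext p
    simp [coneMap, coneVal]
  · intro k
    apply EM.ext'
    funext p
    simp [coneMap, coneVal, w]

end Mil

namespace Mil
set_option linter.unusedSectionVars false
open scoped Classical

/-- the map from `ℝ^m` to the cube -/
def cb {m : ℕ} (y : Fin m → ℝ) : Fin m → unitInterval :=
  fun i => Set.projIcc 0 1 zero_le_one ((y i + 1) / 2)

theorem cb_cont {m : ℕ} : Continuous (cb (m := m)) := by
  refine continuous_pi fun i => continuous_projIcc.comp ?_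
  fun_prop

/-- the inverse of `cb` -/
def bc {m : ℕ} (x : Fin m → unitInterval) : Fin m → ℝ := fun i => 2 * (x i : ℝ) - 1

theorem bc_cont {m : ℕ} : Continuous (bc (m := m)) := by
  refine continuous_pi fun i => ?_
  unfold bc
  fun_prop

theorem cb_bc {m : ℕ} (x : Fin m → unitInterval) : cb (bc x) = x := by
  funext i
  have : ((2 * (x i : ℝ) - 1) + 1) / 2 = x i := by ring
  simp only [cb, bc, this]
  exact Set.projIcc_val zero_le_one (x i)

theorem bc_norm_le {m : ℕ} (x : Fin m → unitInterval) : ‖bc x‖ ≤ 1 := by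
  rw [pi_norm_le_iff_of_nonneg zero_le_one]
  intro i
  have h0 := (x i).2.1
  have h1 := (x i).2.2
  rw [Real.norm_eq_abs, abs_le]
  simp only [bc]
  constructor <;> linarith

theorem cb_boundary {m : ℕ} {y : Fin m → ℝ} (hy : ‖y‖ = 1) : cb y ∈ Cube.boundary (Fin m) := by
  by_contra hc
  have : ‖y‖ < 1 := by
    rw [pi_norm_lt_iff zero_lt_one]
    intro i
    by_contra hi
    apply hc
    refine ⟨i, ?_⟩
    rw [not_lt, Real.norm_eq_abs, le_abs] at hi
    rcases hi with hi | hi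
    · right
      exact Set.projIcc_of_right_le zero_le_one (by linarith)
    · left
      exact Set.projIcc_of_le_left zero_le_one (by linarith)
  linarith

theorem bc_boundary {m : ℕ} {x : Fin m → unitInterval} (hx : x ∈ Cube.boundary (Fin m)) :
    ‖bc x‖ = 1 := by
  refine le_antisymm (bc_norm_le x) ?_
  obtain ⟨i, hi⟩ := hx
  refine le_trans ?_ (norm_le_pi_norm _ i)
  rcases hi with hi | hi <;> simp [bc, hi]
  norm_num

variable {S : Type}

theorem homotopic_of_boundary [Nonempty S] {m : ℕ} (f g : C(Fin m → unitInterval, EM S))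
    (h : ∀ x ∈ Cube.boundary (Fin m), f x = g x) :
    f.HomotopicRel g (Cube.boundary (Fin m)) := by
  let φ : C(Metric.sphere (0 : (Fin m → ℝ) × ℝ) 1, EM S) :=
    ⟨fun z => if 0 ≤ z.1.2 then f (cb z.1.1) else g (cb z.1.1), by
      refine Continuous.if_le ?_ ?_ continuous_const ?_ ?_
      · exact f.continuous.comp (cb_cont.comp (continuous_fst.comp continuous_subtype_val))
      · exact g.continuous.comp (cb_cont.comp (continuous_fst.comp continuous_subtype_val))
      · exact continuous_snd.comp continuous_subtype_val
      · intro z hz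
        apply h
        apply cb_boundary
        have := z.2
        rw [mem_sphere_zero_iff_norm, Prod.norm_def, ← hz] at this
        simpa using this⟩
  haveI : CompactSpace (Metric.sphere (0 : (Fin m → ℝ) × ℝ) 1) :=
    isCompact_iff_compactSpace.1 (isCompact_sphere _ _)
  obtain ⟨F, hF⟩ := extend_of_null (null_of_compact φ)
  have hmem : ∀ (t : unitInterval) (x : Fin m → unitInterval),
      ((bc x, 1 - 2 * (t : ℝ)) : (Fin m → ℝ) × ℝ) ∈ Metric.closedBall (0 : (Fin m → ℝ) × ℝ) 1 := by
    intro t x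
    rw [mem_closedBall_zero_iff, Prod.norm_def, max_le_iff]
    refine ⟨bc_norm_le x, ?_⟩
    have h0 := t.2.1
    have h1 := t.2.2
    rw [Real.norm_eq_abs, abs_le]
    constructor <;> dsimp only <;> linarith
  have hs : ∀ (t : unitInterval) (x : Fin m → unitInterval),
      (t = 0 ∨ t = 1 ∨ x ∈ Cube.boundary (Fin m)) →
      ((bc x, 1 - 2 * (t : ℝ)) : (Fin m → ℝ) × ℝ) ∈ Metric.sphere (0 : (Fin m → ℝ) × ℝ) 1 := by
    intro t x htx
    have h1 := hmem t x
    rw [mem_sphere_zero_iff_norm]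
    rw [mem_closedBall_zero_iff] at h1
    refine le_antisymm h1 ?_
    rw [Prod.norm_def]
    rcases htx with rfl | rfl | hx
    · exact le_max_of_le_right (by simp)
    · exact le_max_of_le_right (by norm_num)
    · exact le_max_of_le_left (by simp [bc_boundary hx])
  refine ⟨⟨⟨⟨fun p => F ⟨(bc p.2, 1 - 2 * (p.1 : ℝ)), hmem p.1 p.2⟩, ?_⟩, ?_, ?_⟩, ?_⟩⟩
  · refine F.continuous.comp (Continuous.subtype_mk (Continuous.prodMk ?_ ?_) _)
    · exact bc_cont.comp continuous_snd
    · fun_prop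
  · intro x
    change F ⟨(bc x, 1 - 2 * ((0 : unitInterval) : ℝ)), _⟩ = f x
    rw [hF _ (hs 0 x (Or.inl rfl))]
    simp [φ, cb_bc]
  · intro x
    change F ⟨(bc x, 1 - 2 * ((1 : unitInterval) : ℝ)), _⟩ = g x
    rw [hF _ (hs 1 x (Or.inr (Or.inl rfl)))]
    simp only [φ, ContinuousMap.coe_mk, cb_bc]
    rw [if_neg]
    simp
  · intro t x hx
    change F ⟨(bc x, 1 - 2 * (t : ℝ)), _⟩ = f x
    rw [hF _ (hs t x (Or.inr (Or.inr hx)))]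
    simp only [φ, ContinuousMap.coe_mk, cb_bc]
    rw [h x hx, ite_self]

theorem paths_homotopic_EM [Nonempty S] {x y : EM S} (p q : Path x y) : p.Homotopic q := by
  let f : C(Fin 1 → unitInterval, EM S) := ⟨fun t => p (t 0), by fun_prop⟩
  let g : C(Fin 1 → unitInterval, EM S) := ⟨fun t => q (t 0), by fun_prop⟩
  obtain ⟨H⟩ := homotopic_of_boundary f g (by
    rintro t ⟨i, hi⟩
    rw [Fin.fin_one_eq_zero i] at hi
    rcases hi with hi | hi <;> simp [f, g, hi])
  refine ⟨⟨⟨⟨fun t => H (t.1, fun _ => t.2), ?_⟩, ?_, ?_⟩, ?_⟩⟩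
  · fun_prop
  · intro t; exact (H.map_zero_left (fun _ => t))
  · intro t; exact (H.map_one_left (fun _ => t))
  · intro t x hx
    refine (H.eq_fst t (x := fun _ => x) ⟨0, ?_⟩)
    simpa using hx

instance [Nonempty S] : PathConnectedSpace (EM S) := by
  obtain ⟨a⟩ := ‹Nonempty S›
  haveI : Nonempty (EM S) := by
    obtain ⟨z, -⟩ := null_of_compact (S := S) (K := Empty) ⟨fun x => x.elim, by fun_prop⟩
    exact ⟨z⟩
  refine ⟨inferInstance, fun x y => ?_⟩
  obtain ⟨z, ⟨H⟩⟩ := null_of_compact (S := S) (K := Bool) ⟨fun b => if b then x else y, by fun_prop⟩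
  have hx : Joined x z := ⟨⟨⟨fun t => H (t, true), by fun_prop⟩, by simp, by simp⟩⟩
  have hy : Joined y z := ⟨⟨⟨fun t => H (t, false), by fun_prop⟩, by simp, by simp⟩⟩
  exact hx.trans hy.symm

instance [Nonempty S] : SimplyConnectedSpace (EM S) :=
  simply_connected_iff_paths_homotopic'.2 ⟨inferInstance, fun {x y} p q => paths_homotopic_EM p q⟩

variable {G : Type} [Group G]

theorem bm_aspherical (b : BM G) (n : ℕ) (hn : 2 ≤ n) :
    Subsingleton (HomotopyGroup.Pi n (BM G) b) := by
  have key : ∀ f : GenLoop (Fin n) (BM G) b, GenLoop.Homotopic f GenLoop.const := by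
    intro f
    let fe : C(Fin n → ℝ, BM G) := ⟨fun y => f (cb y), (f.1.continuous).comp cb_cont⟩
    obtain ⟨x0, hx0⟩ := prj_cov.surjective (fe 0)
    obtain ⟨Fl, ⟨hF0, hF⟩, -⟩ :=
      prj_cov.isCoveringMap.existsUnique_continuousMap_lifts fe (0 : Fin n → ℝ) x0 hx0
    have hF' : ∀ y, prj (Fl y) = f (cb y) := fun y => congrFun hF y
    have hsph : _root_.IsPreconnected (Metric.sphere (0 : Fin n → ℝ) 1) := by
      apply isPreconnected_sphere
      rw [rank_fin_fun]
      exact_mod_cast hn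
    have hne : ∃ e : EM G, prj e = b ∧ ∀ y ∈ Metric.sphere (0 : Fin n → ℝ) 1, Fl y = e := by
      let y0 : Fin n → ℝ := fun _ => 1
      have hy0 : y0 ∈ Metric.sphere (0 : Fin n → ℝ) 1 := by
        haveI : Nonempty (Fin n) := ⟨⟨0, by omega⟩⟩
        rw [mem_sphere_zero_iff_norm]
        simp [y0]
      have hb : ∀ y ∈ Metric.sphere (0 : Fin n → ℝ) 1, prj (Fl y) = b := fun y hy => by
        rw [hF' y]
        exact f.2 _ (cb_boundary (mem_sphere_zero_iff_norm.1 hy))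
      refine ⟨Fl y0, hb _ hy0, fun y hy => ?_⟩
      exact prj_cov.isCoveringMap.constOn_of_comp hsph Fl.continuous.continuousOn
        (fun a ha c hc => by rw [hb a ha, hb c hc]) hy hy0
    obtain ⟨e, he, hFe⟩ := hne
    have h1 := homotopic_of_boundary (S := G) (m := n) (Fl.comp ⟨bc, bc_cont⟩) (ContinuousMap.const _ e)
      (fun x hx => hFe _ (mem_sphere_zero_iff_norm.2 (bc_boundary hx)))
    have h2 := h1.comp_continuousMap (⟨prj, prj_cov.continuous⟩ : C(EM G, BM G))
    unfold GenLoop.Homotopic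
    convert h2 using 1
    · ext x
      change f x = prj (Fl (bc x))
      rw [hF', cb_bc]
    · ext x
      exact he.symm
  refine ⟨fun a c => ?_⟩
  induction a using Quotient.inductionOn
  induction c using Quotient.inductionOn
  exact Quotient.sound ((key _).trans (key _).symm)

end Mil

namespace Mil
set_option linter.unusedSectionVars false
open scoped Classical

/-- the vertex `p` as a point of the complex -/
def vx {S : Type} (p : S × ℕ) : EM S := ⟨fun q => if q = p then 1 else 0, {p}, by
    intro a ha b hb _
    rw [Finset.mem_singleton] at ha hb
    rw [ha, hb], by
    refine ⟨fun q => by dsimp only; split_ifs <;> norm_num, fun q hq => ?_, by simp⟩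
    rw [Finset.mem_singleton] at hq
    simp [hq]⟩

variable {G : Type} [Group G]

theorem smul_vx (g : G) (p : G × ℕ) : g • vx p = vx (ve g p) := by
  apply EM.ext'
  funext q
  rw [smul_val]
  simp only [vx]
  congr 1
  rw [← ve_symm, Equiv.symm_apply_eq]

instance : PathConnectedSpace (BM G) :=
  prj_cov.surjective.pathConnectedSpace prj_cov.continuous

theorem lift_path {b y : BM G} (q : Path b y) (x : EM G) (h : prj x = b) :
    ∃ x' : EM G, prj x' = y ∧ ∃ Q : Path x x', ∀ t, prj (Q t) = q t := by
  obtain ⟨Γ, h1, h2⟩ := prj_cov.isCoveringMap.exists_path_lifts q x (by simp [h])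
  refine ⟨Γ 1, ?_, ⟨Γ, h2, rfl⟩, fun t => congrFun h1 t⟩
  have := congrFun h1 1
  simpa using this

/-- the identification of the fundamental group -/
def mIso (G : Type) [Group G] : FundamentalGroup (BM G) (prj (vx (1, 0))) ≃* G :=
  (prj_cov.fundamentalGroupEquiv (⟨vx (1, 0), rfl⟩ : (prj : EM G → BM G) ⁻¹' {prj (vx (1, 0))})).trans
    (MulEquiv.inv' G).symm

theorem mIso_eq (γ : Path (prj (vx ((1 : G), 0))) (prj (vx ((1 : G), 0)))) (g : G)
    (Γ : Path (vx ((1 : G), 0)) (g • vx ((1 : G), 0))) (h : ∀ t, prj (Γ t) = γ t) :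
    mIso G (pathToPi1 (Path.Homotopic.Quotient.mk γ)) = g⁻¹ := by
  have key : prj_cov.fundamentalGroupToMulOpposite
      (⟨vx (1, 0), rfl⟩ : (prj : EM G → BM G) ⁻¹' {prj (vx (1, 0))})
      (pathToPi1 (Path.Homotopic.Quotient.mk γ)) = MulOpposite.op g := by
    rw [IsQuotientCoveringMap.fundamentalGroupToMulOpposite_apply_eq_Iff]
    have := prj_cov.isCoveringMap.monodromy_eq_of_map_eq (p := (prj : EM G → BM G))
      (γ := Path.Homotopic.Quotient.mk γ)
      (ex := ⟨vx ((1 : G), 0), Set.mem_singleton _⟩) (ey := ⟨g • vx ((1 : G), 0), prj_smul _ _⟩)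
      (Path.Homotopic.Quotient.mk Γ) (by
        refine congrArg Path.Homotopic.Quotient.mk
          (a₁ := Γ.map prj_cov.continuous) (a₂ := γ.cast rfl (prj_smul _ _)) ?_
        ext t
        exact h t)
    exact (congrArg Subtype.val this).symm
  change (MulEquiv.inv' G).symm (prj_cov.fundamentalGroupToMulOpposite _ _) = g⁻¹
  rw [key]
  rfl

/-- Milnor's model of the classifying space -/
def mModel (G : Type) [Group G] : ClassifyingModel G where
  space := BM G
  cw := bmCW G
  pathConnected := inferInstance
  basepoint := prj (vx (1, 0))
  aspherical := fun n hn => bm_aspherical _ n hn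
  iso := mIso G

theorem catGroup_le {F : Set (Subgroup G)} {n : ℕ} (V : Fin (n + 1) → Set (EM G))
    (hV : ∀ i, IsOpen (V i)) (hinv : ∀ i (g : G), ∀ x ∈ V i, g • x ∈ V i)
    (hcov : ∀ x, ∃ i, x ∈ V i)
    (hF : ∀ i, ∀ x ∈ V i, ∃ H ∈ F, ∀ (g : G) (P : Path x (g • x)), (∀ t, P t ∈ V i) → g ∈ H) :
    catGroup G F ≤ n := by
  refine (sInf_le ⟨mModel G, rfl⟩ : catGroup G F ≤ _).trans (sInf_le ⟨n, rfl, ?_⟩)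
  have hmem : ∀ i x, prj x ∈ prj '' V i → x ∈ V i := by
    rintro i x ⟨y, hy, hxy⟩
    obtain ⟨g, rfl⟩ := prj_eq.1 hxy.symm
    exact hinv i g y hy
  refine ⟨fun i => prj '' V i, fun i => prj_cov.isOpenQuotientMap.isOpenMap _ (hV i), ?_, ?_⟩
  · intro y
    obtain ⟨x, rfl⟩ := prj_cov.surjective y
    obtain ⟨i, hi⟩ := hcov x
    exact ⟨i, x, hi, rfl⟩
  · change ∀ i, FCoverCondition (prj (vx ((1 : G), 0))) (mIso G) F (prj '' V i)
    intro i y hy q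
    obtain ⟨x, rfl, Q, hQ⟩ := lift_path q (vx (1, 0)) rfl
    have hx := hmem i x hy
    obtain ⟨H, hHF, hH⟩ := hF i x hx
    refine ⟨H, hHF, fun p hp => ?_⟩
    obtain ⟨x', hx', P, hP⟩ := lift_path p x rfl
    obtain ⟨g, rfl⟩ := prj_eq.1 hx'
    have hg : g ∈ H := hH g P (fun t => hmem i _ (by rw [hP]; exact hp t))
    have hc : Continuous (fun x : EM G => g • x) := continuous_const_smul g
    have := mIso_eq (q.trans (p.trans q.symm)) g (Q.trans (P.trans (Q.map hc).symm)) (by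
      intro t
      simp only [Path.trans_apply]
      split_ifs
      · exact hQ _
      · exact hP _
      · simp only [Path.symm_apply, Path.map_coe, Function.comp_apply, prj_smul]
        exact hQ _)
    have h2 : mIso G (pathToPi1 (Path.Homotopic.Quotient.mk (q.trans (p.trans q.symm)))) ∈ H := by
      rw [this]
      exact H.inv_mem hg
    exact h2

end Mil

namespace Mil
set_option linter.unusedSectionVars false
open scoped Classical

variable {G : Type} [Group G] {Z : Type} [TopologicalSpace Z] [MulAction G Z]
  [ContinuousConstSMul G Z]

/-- `f` is a good equivariant map on the `(n-1)`-skeleton -/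
def Good (G : Type) [Group G] {Z : Type} [TopologicalSpace Z] [MulAction G Z]
    (n : ℕ) (f : EM G → Z) : Prop :=
  (∀ (g : G) (x : EM G), x.supp.card ≤ n → f (g • x) = g • f x) ∧
    ∀ s : {s : Finset (G × ℕ) // Chn s}, s.1.card ≤ n → Continuous fun x => f (inc s x)

theorem supp_eq_of_card {s : {s : Finset (G × ℕ) // Chn s}} {x : Spx s.1}
    (h : s.1.card ≤ (inc s x).supp.card) : (inc s x).supp = s.1 :=
  Finset.eq_of_subset_of_card_le (supp_inc_subset x) h

theorem good_step {n : ℕ} {f : EM G → Z} (hf : Good G n f)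
    (hext : ∀ s : {s : Finset (G × ℕ) // Chn s}, s.1.card = n + 1 →
      ∃ F : Spx s.1 → Z, Continuous F ∧ ∀ x : Spx s.1, (∃ p ∈ s.1, x.1 p = 0) → F x = f (inc s x)) :
    ∃ f' : EM G → Z, Good G (n + 1) f' ∧ ∀ x : EM G, x.supp.card ≤ n → f' x = f x := by
  choose K hKc hKb using hext
  let Kt : EM G → Z := fun y => if h : y.supp.card = n + 1 then
    K ⟨y.supp, y.supp_chn⟩ h ⟨y.val, EM.mem_Spx_iff.2 (Finset.Subset.refl _)⟩ else f y
  have hKt : ∀ (s : {s : Finset (G × ℕ) // Chn s}) (hs : s.1.card = n + 1) (y : EM G)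
      (hy : y.supp = s.1), Kt y = K s hs ⟨y.val, EM.mem_Spx_iff.2 hy.subset⟩ := by
    rintro ⟨s, hc⟩ hs y hy
    dsimp only at hy hs
    subst hy
    exact dif_pos hs
  let f' : EM G → Z := fun x => if x.supp.card = n + 1 then
    lab x.supp • Kt ((lab x.supp)⁻¹ • x) else f x
  have hlow : ∀ x : EM G, x.supp.card ≤ n → f' x = f x := fun x hx => if_neg (by omega)
  refine ⟨f', ⟨?_, ?_⟩, hlow⟩
  · intro g x hx
    have hcard : (g • x).supp.card = x.supp.card := by rw [supp_smul, card_vs]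
    by_cases h : x.supp.card = n + 1
    · simp only [f', hcard, if_pos h]
      rw [supp_smul, lab_vs x.supp_chn x.supp_nonempty, mul_smul, mul_inv_rev, mul_smul,
        inv_smul_smul]
    · rw [hlow x (by omega), hlow _ (by omega)]
      exact hf.1 g x (by omega)
  · intro s hs
    by_cases hs1 : s.1.card = n + 1
    · let g := lab s.1
      let s' : {s : Finset (G × ℕ) // Chn s} := ⟨vs g⁻¹ s.1, chn_vs s.2⟩
      have hs' : s'.1.card = n + 1 := by rw [← hs1]; exact card_vs _ _
      have hm : ∀ x : Spx s.1, (g⁻¹ • inc s x).val ∈ Spx s'.1 := fun x => by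
        rw [EM.mem_Spx_iff, supp_smul]
        intro p hp
        rw [mem_vs] at hp ⊢
        exact supp_inc_subset x hp
      have key : ∀ x : Spx s.1, f' (inc s x) = g • K s' hs' ⟨_, hm x⟩ := by
        intro x
        by_cases h : (inc s x).supp.card = n + 1
        · have he : (inc s x).supp = s.1 := supp_eq_of_card (by omega)
          have h1 : f' (inc s x) = lab (inc s x).supp • Kt ((lab (inc s x).supp)⁻¹ • (inc s x)) :=
            if_pos h
          rw [h1, he, hKt s' hs' _ (by rw [supp_smul, he])]
        · have hlt : (inc s x).supp.card ≤ n := by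
            have := Finset.card_le_card (supp_inc_subset x)
            omega
          rw [hlow _ hlt, hKb]
          · have : inc s' ⟨_, hm x⟩ = g⁻¹ • inc s x := rfl
            rw [this, hf.1 _ _ hlt, smul_inv_smul]
          · have : ∃ p ∈ s.1, p ∉ (inc s x).supp := by
              by_contra hcon
              push Not at hcon
              have := Finset.card_le_card (show s.1 ⊆ _ from hcon)
              omega
            obtain ⟨p, hp, hpn⟩ := this
            refine ⟨ve g⁻¹ p, ve_mem_vs hp, ?_⟩
            rw [EM.mem_supp, not_not] at hpn
            change (g⁻¹ • inc s x).val (ve g⁻¹ p) = 0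
            rw [smul_val, ve_mul, inv_inv, mul_inv_cancel]
            simpa [ve] using hpn
      simp only [key]
      refine ((hKc s' hs').comp (Continuous.subtype_mk (continuous_pi fun p => ?_) _)).const_smul g
      exact (continuous_apply (ve (g⁻¹)⁻¹ p)).comp continuous_subtype_val
    · have := hf.2 s (by omega)
      convert this using 2 with x
      apply hlow
      have := Finset.card_le_card (supp_inc_subset x)
      omega

theorem equiv_ext (k : ℕ) (f0 : EM G → Z) (h0 : Good G k f0)
    (hext : ∀ n, k ≤ n → ∀ f : EM G → Z, Good G n f →
      (∀ x : EM G, x.supp.card ≤ k → f x = f0 x) →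
      ∀ s : {s : Finset (G × ℕ) // Chn s}, s.1.card = n + 1 →
      ∃ F : Spx s.1 → Z, Continuous F ∧ ∀ x : Spx s.1, (∃ p ∈ s.1, x.1 p = 0) → F x = f (inc s x)) :
    ∃ f : EM G → Z, Continuous f ∧ (∀ (g : G) (x : EM G), f (g • x) = g • f x) ∧
      ∀ x : EM G, x.supp.card ≤ k → f x = f0 x := by
  let T : ℕ → Type := fun j => {f : EM G → Z // Good G (k + j) f ∧
    ∀ x : EM G, x.supp.card ≤ k → f x = f0 x}
  have stepE : ∀ j (f : T j), ∃ f' : T (j + 1), ∀ x : EM G, x.supp.card ≤ k + j → f'.1 x = f.1 x := by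
    intro j f
    obtain ⟨f', h1, h2⟩ := good_step f.2.1 (hext (k + j) (by omega) f.1 f.2.1 f.2.2)
    exact ⟨⟨f', h1, fun x hx => by rw [h2 x (by omega), f.2.2 x hx]⟩, h2⟩
  choose nx hnx using stepE
  let sq : ∀ j, T j := fun j => Nat.rec (motive := T) ⟨f0, h0, fun _ _ => rfl⟩ nx j
  have hsq : ∀ j (x : EM G), x.supp.card ≤ k + j → (sq (j + 1)).1 x = (sq j).1 x :=
    fun j x hx => hnx j (sq j) x hx
  have agree : ∀ i d (x : EM G), x.supp.card ≤ k + i → (sq (i + d)).1 x = (sq i).1 x := by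
    intro i d x hx
    induction d with
    | zero => rfl
    | succ d ih => exact (hsq (i + d) x (by omega)).trans ih
  have agree2 : ∀ i j (x : EM G), x.supp.card ≤ k + i → x.supp.card ≤ k + j →
      (sq i).1 x = (sq j).1 x := by
    intro i j x hi hj
    rcases le_total i j with h | h
    · obtain ⟨d, rfl⟩ := Nat.exists_eq_add_of_le h
      exact (agree i d x hi).symm
    · obtain ⟨d, rfl⟩ := Nat.exists_eq_add_of_le h
      exact agree j d x hj
  refine ⟨fun x => (sq x.supp.card).1 x, ?_, ?_, ?_⟩
  · rw [continuous_iff_inc]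
    intro s
    have := (sq s.1.card).2.1.2 s (by omega)
    convert this using 2 with x
    have := Finset.card_le_card (supp_inc_subset x)
    exact agree2 _ _ _ (by omega) (by omega)
  · intro g x
    dsimp only
    rw [show (g • x).supp.card = x.supp.card by rw [supp_smul, card_vs]]
    exact (sq x.supp.card).2.1.1 g x (by omega)
  · intro x hx
    exact (sq x.supp.card).2.2 x hx

/-- continuity on the boundary of a simplex -/
theorem good_boundary {n : ℕ} {f : EM G → Z} (hf : Good G n f)
    (s : {s : Finset (G × ℕ) // Chn s}) (hs : s.1.card = n + 1) :
    ContinuousOn (fun x : Spx s.1 => f (inc s x)) {x | ∃ p ∈ s.1, x.1 p = 0} := by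
  have : {x : Spx s.1 | ∃ p ∈ s.1, x.1 p = 0} = ⋃ p : s.1, {x : Spx s.1 | x.1 p = 0} := by
    ext x; simp
  rw [this]
  refine LocallyFinite.continuousOn_iUnion (locallyFinite_of_finite _) ?_ ?_
  · intro p
    exact isClosed_eq ((continuous_apply _).comp continuous_subtype_val) continuous_const
  · intro p
    let t : {s : Finset (G × ℕ) // Chn s} := ⟨s.1.erase p, s.2.mono (Finset.erase_subset _ _)⟩
    have ht := hf.2 t (by
      change (s.1.erase p).card ≤ n
      rw [Finset.card_erase_of_mem p.2]; omega)
    have hm : ∀ x : {x : Spx s.1 | x.1 p = 0}, x.1.1 ∈ Spx t.1 := by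
      intro x
      have h1 : (inc s x.1).val ∈ Spx t.1 := by
        rw [EM.mem_Spx_iff]
        intro q hq
        refine Finset.mem_erase.2 ⟨?_, supp_inc_subset _ hq⟩
        rintro rfl
        exact (EM.mem_supp.1 hq) x.2
      exact h1
    rw [continuousOn_iff_continuous_domRestrict]
    exact ht.comp (Continuous.subtype_mk (continuous_subtype_val.comp continuous_subtype_val) hm)

/-- A map to a contractible space. -/
theorem exists_gmap_contractible [ContractibleSpace Z] :
    ∃ f : EM G → Z, Continuous f ∧ ∀ (g : G) (x : EM G), f (g • x) = g • f x := by
  obtain ⟨z0⟩ : Nonempty Z := inferInstance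
  obtain ⟨f, h1, h2, -⟩ := equiv_ext (G := G) (Z := Z) 0 (fun _ => z0) ⟨fun g x hx => by
      have := Finset.card_pos.2 x.supp_nonempty
      omega, fun s hs => continuous_const⟩ (by
    intro n _ f hf _ s hs
    obtain ⟨h, hh⟩ := simplexHomeo (V := Fin n → ℝ) (ContinuousLinearEquiv.refl ℝ (Fin n → ℝ)) hs
    have hbd : ∀ z : Metric.closedBall (0 : Fin n → ℝ) 1, ‖z.1‖ = 1 ↔ ∃ p ∈ s.1, (h z).1 p = 0 := by
      intro z
      have hz : ‖z.1‖ ≤ 1 := mem_closedBall_zero_iff.1 z.2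
      have := hh z
      rw [← not_iff_not]
      push Not
      rw [show (‖z.1‖ ≠ 1 ↔ ‖z.1‖ < 1) from ⟨fun h => lt_of_le_of_ne hz h, fun h => h.ne⟩, this]
      refine forall₂_congr fun p hp => ?_
      exact ⟨fun h => h.ne', fun h' => lt_of_le_of_ne ((inc s (h z)).nonneg p) (Ne.symm h')⟩
    let b : C(Metric.sphere (0 : Fin n → ℝ) 1, Z) :=
      ⟨fun z => f (inc s (h ⟨z.1, Metric.sphere_subset_closedBall z.2⟩)), by
        refine (good_boundary hf s hs).comp_continuous (by fun_prop) ?_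
        intro z
        exact (hbd ⟨z.1, Metric.sphere_subset_closedBall z.2⟩).1 (mem_sphere_zero_iff_norm.1 z.2)⟩
    obtain ⟨F, hF⟩ := extend_of_null (null_of_contractible b)
    refine ⟨fun x => F (h.symm x), by fun_prop, fun x hx => ?_⟩
    have h1 : ‖(h.symm x).1‖ = 1 := by
      rw [hbd]
      simpa using hx
    have := hF (h.symm x).1 (mem_sphere_zero_iff_norm.2 h1)
    refine this.trans ?_
    change f (inc s (h (h.symm x))) = _
    rw [h.apply_symm_apply])
  exact ⟨f, h1, h2⟩

end Mil

namespace Mil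
set_option linter.unusedSectionVars false
open scoped Classical

theorem bc_cb {m : ℕ} {y : Fin m → ℝ} (hy : ‖y‖ ≤ 1) : bc (cb y) = y := by
  funext i
  have h1 : |y i| ≤ 1 := (Real.norm_eq_abs _ ▸ norm_le_pi_norm y i).trans hy
  rw [abs_le] at h1
  have h2 : (y i + 1) / 2 ∈ Set.Icc (0 : ℝ) 1 := ⟨by linarith [h1.1], by linarith [h1.2]⟩
  simp only [bc, cb, Set.projIcc_of_mem zero_le_one h2]
  ring

/-- the collapsing parameter -/
def colu {m : ℕ} (z : (Fin m → ℝ) × ℝ) : ℝ := max ‖z.1‖ ((1 - z.2) / 2)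

/-- the unnormalised collapsing map -/
def colw {m : ℕ} (r : ℝ) (z : (Fin m → ℝ) × ℝ) : (Fin m → ℝ) × ℝ :=
  ((1 - r * colu z) • z.1, z.2 - 2 * (r * colu z))

theorem colw_cont {m : ℕ} : Continuous fun p : ℝ × ((Fin m → ℝ) × ℝ) => colw p.1 p.2 := by
  unfold colw colu
  fun_prop

theorem sphere_bounds {m : ℕ} {z : (Fin m → ℝ) × ℝ} (hz : ‖z‖ = 1) :
    ‖z.1‖ ≤ 1 ∧ -1 ≤ z.2 ∧ z.2 ≤ 1 ∧ (‖z.1‖ = 1 ∨ z.2 = 1 ∨ z.2 = -1) := by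
  rw [Prod.norm_def] at hz
  have h1 : ‖z.1‖ ≤ 1 := hz ▸ le_max_left _ _
  have h2 : ‖z.2‖ ≤ 1 := hz ▸ le_max_right _ _
  rw [Real.norm_eq_abs, abs_le] at h2
  refine ⟨h1, h2.1, h2.2, ?_⟩
  rcases max_choice ‖z.1‖ ‖z.2‖ with h | h
  · left; rw [← h, hz]
  · right
    rw [h, Real.norm_eq_abs] at hz
    exact eq_or_eq_neg_of_abs_eq hz

theorem colw_ne {m : ℕ} {r : ℝ} (h0 : 0 ≤ r) (z : (Fin m → ℝ) × ℝ) (hz : ‖z‖ = 1) :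
    colw r z ≠ 0 := by
  intro h
  obtain ⟨b1, b2, b3, b4⟩ := sphere_bounds hz
  have e1 : (1 - r * colu z) • z.1 = 0 := congrArg Prod.fst h
  have e2 : z.2 - 2 * (r * colu z) = 0 := congrArg Prod.snd h
  have hu : 0 ≤ colu z := le_max_of_le_left (norm_nonneg _)
  rw [smul_eq_zero] at e1
  rcases e1 with e1 | e1
  · linarith
  · have hn : ‖z.1‖ = 0 := by rw [e1, norm_zero]
    have : 0 ≤ r * colu z := mul_nonneg h0 hu
    rcases b4 with b | b | b
    · linarith
    · have : colu z = 0 := by simp [colu, hn, b]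
      rw [this, b] at e2
      norm_num at e2
    · linarith

variable {Y : Type} [TopologicalSpace Y]

theorem rsp_mem {m : ℕ} (r : unitInterval) (z : Metric.sphere (0 : (Fin m → ℝ) × ℝ) 1) :
    ‖colw r z.1‖⁻¹ • colw r z.1 ∈ Metric.sphere (0 : (Fin m → ℝ) × ℝ) 1 := by
  have := colw_ne r.2.1 z.1 (mem_sphere_zero_iff_norm.1 z.2)
  rw [mem_sphere_zero_iff_norm, norm_smul, norm_inv, norm_norm,
    inv_mul_cancel₀ (norm_ne_zero_iff.2 this)]

/-- the collapsing homotopy of the sphere -/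
def rsp {m : ℕ} (p : unitInterval × Metric.sphere (0 : (Fin m → ℝ) × ℝ) 1) :
    Metric.sphere (0 : (Fin m → ℝ) × ℝ) 1 := ⟨_, rsp_mem p.1 p.2⟩

theorem rsp_cont {m : ℕ} : Continuous (rsp (m := m)) := by
  have hc : Continuous fun p : unitInterval × Metric.sphere (0 : (Fin m → ℝ) × ℝ) 1 =>
      colw (p.1 : ℝ) p.2.1 :=
    colw_cont.comp (Continuous.prodMk (continuous_subtype_val.comp continuous_fst)
      (continuous_subtype_val.comp continuous_snd))
  refine Continuous.subtype_mk (Continuous.smul (Continuous.inv₀ hc.norm ?_) hc) _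
  intro p
  exact norm_ne_zero_iff.2 (colw_ne p.1.2.1 _ (mem_sphere_zero_iff_norm.1 p.2.2))

theorem rsp_zero {m : ℕ} (z : Metric.sphere (0 : (Fin m → ℝ) × ℝ) 1) : rsp (0, z) = z := by
  apply Subtype.ext
  have hz : ‖z.1‖ = 1 := mem_sphere_zero_iff_norm.1 z.2
  have : colw ((0 : unitInterval) : ℝ) z.1 = z.1 := by
    simp [colw]
  change ‖colw ((0 : unitInterval) : ℝ) z.1‖⁻¹ • colw ((0 : unitInterval) : ℝ) z.1 = z.1
  rw [this, hz, inv_one, one_smul]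

theorem rsp_one {m : ℕ} (z : Metric.sphere (0 : (Fin m → ℝ) × ℝ) 1)
    (hz : ‖z.1.1‖ = 1 ∨ z.1.2 = -1) : (rsp (1, z)).1 = ((0, -1) : (Fin m → ℝ) × ℝ) := by
  obtain ⟨b1, b2, b3, -⟩ := sphere_bounds (mem_sphere_zero_iff_norm.1 z.2)
  have hu : colu z.1 = 1 := by
    unfold colu
    apply le_antisymm
    · exact max_le b1 (by linarith)
    · rcases hz with h | h
      · exact le_max_of_le_left h.ge
      · exact le_max_of_le_right (by rw [h]; norm_num)
  have hw : colw ((1 : unitInterval) : ℝ) z.1 = (0, z.1.2 - 2) := by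
    simp [colw, hu]
  change ‖colw ((1 : unitInterval) : ℝ) z.1‖⁻¹ • colw ((1 : unitInterval) : ℝ) z.1 = _
  have hneg : z.1.2 - 2 < 0 := by linarith
  have hnn : ‖((0, z.1.2 - 2) : (Fin m → ℝ) × ℝ)‖ = -(z.1.2 - 2) := by
    rw [Prod.norm_def, norm_zero, Real.norm_eq_abs, abs_of_neg hneg]
    exact max_eq_right (by linarith)
  rw [hw, hnn, Prod.smul_mk, smul_zero, smul_eq_mul, inv_neg, neg_mul, inv_mul_cancel₀ hneg.ne]

theorem collapse_sphere {y0 : Y} {m : ℕ}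
    (f : C(Metric.sphere (0 : (Fin m → ℝ) × ℝ) 1, Y))
    (hf : ∀ z, z.1 = ((0, -1) : (Fin m → ℝ) × ℝ) → f z = y0) :
    ∃ f' : C(Metric.sphere (0 : (Fin m → ℝ) × ℝ) 1, Y), f.Homotopic f' ∧
      ∀ z : Metric.sphere (0 : (Fin m → ℝ) × ℝ) 1, (‖z.1.1‖ = 1 ∨ z.1.2 = -1) → f' z = y0 := by
  refine ⟨⟨fun z => f (rsp (1, z)), f.continuous.comp
      (rsp_cont.comp (Continuous.prodMk continuous_const continuous_id))⟩, ?_, ?_⟩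
  · refine ⟨⟨⟨fun p => f (rsp p), f.continuous.comp rsp_cont⟩, ?_, ?_⟩⟩
    · intro z
      exact congrArg f (rsp_zero z)
    · intro z
      rfl
  · intro z hz
    exact hf _ (rsp_one z hz)

theorem extend_aspherical {y0 : Y} {m : ℕ} (hY : Subsingleton (HomotopyGroup.Pi m Y y0))
    (f : C(Metric.sphere (0 : (Fin m → ℝ) × ℝ) 1, Y))
    (hf : ∀ z, z.1 = ((0, -1) : (Fin m → ℝ) × ℝ) → f z = y0) :
    ∃ F : C(Metric.closedBall (0 : (Fin m → ℝ) × ℝ) 1, Y),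
      ∀ x (hx : x ∈ Metric.sphere (0 : (Fin m → ℝ) × ℝ) 1),
      F ⟨x, Metric.sphere_subset_closedBall hx⟩ = f ⟨x, hx⟩ := by
  obtain ⟨f', hhom, hside⟩ := collapse_sphere f hf
  have htop : ∀ x : Fin m → unitInterval, ((bc x, 1) : (Fin m → ℝ) × ℝ) ∈
      Metric.sphere (0 : (Fin m → ℝ) × ℝ) 1 := by
    intro x
    rw [mem_sphere_zero_iff_norm, Prod.norm_def]
    simp [bc_norm_le x]
  let l : GenLoop (Fin m) Y y0 := ⟨⟨fun x => f' ⟨_, htop x⟩, f'.continuous.comp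
      (Continuous.subtype_mk (Continuous.prodMk bc_cont continuous_const) _)⟩, by
    intro x hx
    exact hside _ (Or.inl (bc_boundary hx))⟩
  have hl : GenLoop.Homotopic l GenLoop.const :=
    Quotient.exact (Subsingleton.elim (α := HomotopyGroup.Pi m Y y0) ⟦l⟧ ⟦GenLoop.const⟧)
  obtain ⟨K⟩ := hl
  refine extend_of_homotopic hhom ⟨fun z => K (Set.projIcc 0 1 zero_le_one ((1 - z.1.2) / 2), cb z.1.1), ?_⟩ ?_
  · refine K.continuous.comp (Continuous.prodMk (continuous_projIcc.comp (by fun_prop))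
      (cb_cont.comp (by fun_prop)))
  · intro z hz
    obtain ⟨b1, b2, b3, b4⟩ := sphere_bounds (mem_sphere_zero_iff_norm.1 hz)
    dsimp only [ContinuousMap.coe_mk]
    rcases b4 with b | b | b
    · rw [hside ⟨z, hz⟩ (Or.inl b)]
      rw [K.eq_snd _ (cb_boundary b)]
      rfl
    · have : Set.projIcc (0 : ℝ) 1 zero_le_one ((1 - z.2) / 2) = 0 :=
        Set.projIcc_of_le_left zero_le_one (by rw [b]; norm_num)
      rw [this, K.apply_zero]
      change f' ⟨_, htop (cb z.1)⟩ = _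
      congr 1
      apply Subtype.ext
      exact Prod.ext (bc_cb b1) b.symm
    · have : Set.projIcc (0 : ℝ) 1 zero_le_one ((1 - z.2) / 2) = 1 :=
        Set.projIcc_of_right_le zero_le_one (by rw [b]; norm_num)
      rw [this, K.apply_one, hside ⟨z, hz⟩ (Or.inr b)]
      rfl

end Mil

namespace Mil
set_option linter.unusedSectionVars false
open scoped Classical

variable {G : Type} [Group G]

theorem exists_maxv {S : Type} (s : Finset (S × ℕ)) (h : s.Nonempty) : ∃ p ∈ s, ∀ q ∈ s, q.2 ≤ p.2 :=
  s.exists_max_image Prod.snd h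

/-- the vertex of largest colour -/
def mxv (s : Finset (G × ℕ)) : G × ℕ := if h : s.Nonempty then (exists_maxv s h).choose else 1

theorem mxv_eq {s : Finset (G × ℕ)} (hs : Chn s) {p : G × ℕ} (hp : p ∈ s)
    (hm : ∀ q ∈ s, q.2 ≤ p.2) : mxv s = p := by
  have h : s.Nonempty := ⟨p, hp⟩
  rw [mxv, dif_pos h]
  have := (exists_maxv s h).choose_spec
  exact hs _ this.1 _ hp (le_antisymm (hm _ this.1) (this.2 _ hp))

theorem mxv_vs {s : Finset (G × ℕ)} (hs : Chn s) (hne : s.Nonempty) (g : G) :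
    mxv (vs g s) = ve g (mxv s) := by
  obtain ⟨p, hp, hm⟩ := exists_maxv s hne
  rw [mxv_eq hs hp hm, mxv_eq (chn_vs hs) (ve_mem_vs (g := g) hp)]
  intro q hq
  have := hm _ (mem_vs.1 hq)
  simpa using this

variable {Y : Type} [TopologicalSpace Y] {y0 : Y} (lp : G → Path y0 y0)

/-- the map on the `1`-skeleton -/
def fz (x : EM G) : Y := (lp ((mxv x.supp).1⁻¹ * lab x.supp)).extend (x.val (mxv x.supp))

theorem fz_smul (g : G) (x : EM G) : fz lp (g • x) = fz lp x := by
  unfold fz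
  rw [supp_smul, lab_vs x.supp_chn x.supp_nonempty, mxv_vs x.supp_chn x.supp_nonempty, smul_val,
    ve_mul, inv_mul_cancel]
  have h1 : ve (1 : G) (mxv x.supp) = mxv x.supp := by
    apply Prod.ext <;> simp [ve]
  rw [h1]
  congr 2
  simp [ve]

theorem EM.val_zero {x : EM G} {p : G × ℕ} (h : p ∉ x.supp) : x.val p = 0 := by
  rw [EM.mem_supp, not_not] at h
  exact h

theorem EM.sum_supp (x : EM G) : ∑ p ∈ x.supp, x.val p = 1 :=
  (EM.mem_Spx_iff.2 (Finset.Subset.refl x.supp)).2.2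

theorem EM.sum_of_subset {x : EM G} {s : Finset (G × ℕ)} (h : x.supp ⊆ s) : ∑ p ∈ s, x.val p = 1 :=
  (EM.mem_Spx_iff.2 h).2.2

theorem chn_singleton (p : G × ℕ) : Chn ({p} : Finset (G × ℕ)) := by
  intro a ha b hb _
  rw [Finset.mem_singleton] at ha hb
  rw [ha, hb]

theorem fz_vertex {x : EM G} {p : G × ℕ} (h : x.supp = {p}) : fz lp x = y0 := by
  unfold fz
  have h1 : mxv x.supp = p := by
    rw [h]
    exact mxv_eq (chn_singleton p) (Finset.mem_singleton_self p) (by simp)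
  have h2 : x.val p = 1 := by
    have := x.sum_supp
    rwa [h, Finset.sum_singleton] at this
  rw [h1, h2, Path.extend_one]

theorem fz_edge {x : EM G} {a b : G × ℕ} (hab : a.2 < b.2) (h : x.supp ⊆ {a, b}) :
    fz lp x = (lp (b.1⁻¹ * a.1)).extend (x.val b) := by
  have hne : a ≠ b := fun h => by rw [h] at hab; exact lt_irrefl _ hab
  by_cases ha : a ∈ x.supp
  · by_cases hb : b ∈ x.supp
    · have h1 : mxv x.supp = b := mxv_eq x.supp_chn hb fun q hq => by
        have := h hq
        simp only [Finset.mem_insert, Finset.mem_singleton] at this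
        rcases this with rfl | rfl
        · exact hab.le
        · exact le_rfl
      have h2 : lab x.supp = a.1 := lab_eq x.supp_chn ha fun q hq => by
        have := h hq
        simp only [Finset.mem_insert, Finset.mem_singleton] at this
        rcases this with rfl | rfl
        · exact le_rfl
        · exact hab.le
      rw [fz, h1, h2]
    · have h1 : x.supp = {a} := by
        apply Finset.Subset.antisymm
        · intro q hq
          have := h hq
          simp only [Finset.mem_insert, Finset.mem_singleton] at this ⊢
          rcases this with rfl | rfl
          · rfl
          · exact absurd hq hb
        · simpa using ha
      rw [fz_vertex lp h1, EM.val_zero hb, Path.extend_zero]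
  · have h1 : x.supp = {b} := by
      have hs : x.supp ⊆ {b} := by
        intro q hq
        have := h hq
        simp only [Finset.mem_insert, Finset.mem_singleton] at this ⊢
        rcases this with rfl | rfl
        · exact absurd hq ha
        · rfl
      exact (Finset.subset_singleton_iff.1 hs).resolve_left x.supp_nonempty.ne_empty
    have h2 := x.sum_supp
    rw [h1, Finset.sum_singleton] at h2
    rw [fz_vertex lp h1, h2, Path.extend_one]

theorem fz_cont (s : {s : Finset (G × ℕ) // Chn s}) (hs : s.1.card ≤ 2) :
    Continuous fun x => fz lp (inc s x) := by
  have h2 : ∀ a b : G × ℕ, a.2 < b.2 → s.1 = {a, b} → Continuous fun x => fz lp (inc s x) := by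
    intro a b hab hs
    have : ∀ x : Spx s.1, fz lp (inc s x) = (lp (b.1⁻¹ * a.1)).extend (x.1 b) := fun x =>
      fz_edge lp hab (by rw [← hs]; exact supp_inc_subset x)
    simp only [this]
    exact (Path.continuous_extend _).comp ((continuous_apply b).comp continuous_subtype_val)
  interval_cases hc : s.1.card
  · rw [Finset.card_eq_zero] at hc
    have : ∀ x : Spx s.1, False := fun x => by
      have h0 := supp_inc_subset (s := s) x
      rw [hc] at h0
      exact (inc s x).supp_nonempty.ne_empty (Finset.subset_empty.1 h0)
    exact continuous_iff_continuousAt.2 fun x => (this x).elim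
  · obtain ⟨p, hp⟩ := Finset.card_eq_one.1 hc
    have : ∀ x : Spx s.1, fz lp (inc s x) = y0 := fun x => fz_vertex lp (p := p) (by
      rw [← hp]
      apply supp_eq_of_card
      rw [hc]
      exact Finset.card_pos.2 (inc s x).supp_nonempty)
    simp only [this]
    exact continuous_const
  · obtain ⟨a, b, hab, hs'⟩ := Finset.card_eq_two.1 hc
    have ha : a ∈ s.1 := by simp [hs']
    have hb : b ∈ s.1 := by simp [hs']
    rcases lt_trichotomy a.2 b.2 with h | h | h
    · exact h2 a b h hs'
    · exact absurd (s.2 a ha b hb h) hab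
    · exact h2 b a h (by rw [hs', Finset.pair_comm])

theorem exists_triple {s : Finset (G × ℕ)} (hs : Chn s) (h : s.card = 3) :
    ∃ a b c : G × ℕ, a.2 < b.2 ∧ b.2 < c.2 ∧ s = {a, b, c} := by
  obtain ⟨a, ha, hma⟩ := exists_minv s (Finset.card_pos.1 (by omega))
  have h1 : (s.erase a).card = 2 := by rw [Finset.card_erase_of_mem ha]; omega
  obtain ⟨b, hb, hmb⟩ := exists_minv (s.erase a) (Finset.card_pos.1 (by omega))
  have h2 : ((s.erase a).erase b).card = 1 := by rw [Finset.card_erase_of_mem hb]; omega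
  obtain ⟨c, hc⟩ := Finset.card_eq_one.1 h2
  have hc' : c ∈ (s.erase a).erase b := by rw [hc]; exact Finset.mem_singleton_self c
  have hbs := Finset.mem_erase.1 hb
  have hcs := Finset.mem_erase.1 hc'
  have hcs' := Finset.mem_erase.1 hcs.2
  refine ⟨a, b, c, ?_, ?_, ?_⟩
  · exact lt_of_le_of_ne (hma b hbs.2) fun h => hbs.1 (hs _ ha _ hbs.2 h).symm
  · exact lt_of_le_of_ne (hmb c hcs.2) fun h => hcs.1 (hs _ hbs.2 _ hcs'.2 h).symm
  · rw [← Finset.insert_erase ha, ← Finset.insert_erase hb, hc]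

end Mil

namespace Mil
set_option linter.unusedSectionVars false
open scoped Classical

theorem descend {A B Y : Type} [TopologicalSpace A] [TopologicalSpace B] [TopologicalSpace Y]
    [CompactSpace A] [T2Space B] (q : A → B) (hq : Continuous q) (hs : Function.Surjective q)
    (k : A → Y) (hk : Continuous k) (h : ∀ a a', q a = q a' → k a = k a') :
    ∃ F : B → Y, Continuous F ∧ ∀ a, F (q a) = k a := by
  have hquot : Topology.IsQuotientMap q := hq.isClosedMap.isQuotientMap hq hs
  choose r hr using hs
  refine ⟨fun b => k (r b), ?_, fun a => h _ _ (hr _)⟩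
  rw [hquot.continuous_iff]
  have : (fun b => k (r b)) ∘ q = k := funext fun a => h _ _ (hr _)
  rw [this]
  exact hk

variable {G : Type} [Group G] {Y : Type} [TopologicalSpace Y] {y0 : Y}

/-- parametrisation of a triangle by a square -/
def thv (a b c : G × ℕ) (z : unitInterval × unitInterval) (p : G × ℕ) : ℝ :=
  if p = b then (1 - (z.1 : ℝ)) * (2 * min (z.2 : ℝ) (1 - z.2)) else
  if p = c then (z.2 : ℝ) - (1 - (z.1 : ℝ)) * min (z.2 : ℝ) (1 - z.2) else
  if p = a then 1 - (z.2 : ℝ) - (1 - (z.1 : ℝ)) * min (z.2 : ℝ) (1 - z.2) else 0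

theorem thv_cont (a b c : G × ℕ) : Continuous (thv a b c) := by
  refine continuous_pi fun p => ?_
  unfold thv
  split_ifs <;> fun_prop

theorem sum_triple {a b c : G × ℕ} (hab : a ≠ b) (hac : a ≠ c) (hbc : b ≠ c) (x : G × ℕ → ℝ) :
    ∑ p ∈ ({a, b, c} : Finset (G × ℕ)), x p = x a + x b + x c := by
  rw [Finset.sum_insert (by simp [hab, hac]), Finset.sum_insert (by simp [hbc]),
    Finset.sum_singleton, add_assoc]

theorem thv_mem {a b c : G × ℕ} (hab : a ≠ b) (hac : a ≠ c) (hbc : b ≠ c)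
    (z : unitInterval × unitInterval) : thv a b c z ∈ Spx ({a, b, c} : Finset (G × ℕ)) := by
  obtain ⟨⟨s, hs0, hs1⟩, ⟨t, ht0, ht1⟩⟩ := z
  have hm0 : 0 ≤ min t (1 - t) := le_min ht0 (by linarith)
  have hm1 : min t (1 - t) ≤ t := min_le_left _ _
  have hm2 : min t (1 - t) ≤ 1 - t := min_le_right _ _
  have h1 : (1 - s) * min t (1 - t) ≤ min t (1 - t) := by nlinarith
  refine ⟨fun p => ?_, fun p hp => ?_, ?_⟩
  · unfold thv
    dsimp only
    split_ifs
    · have : 0 ≤ 1 - s := by linarith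
      positivity
    · linarith
    · linarith
    · exact le_rfl
  · simp only [Finset.mem_insert, Finset.mem_singleton, not_or] at hp
    simp [thv, hp.1, hp.2.1, hp.2.2]
  · rw [sum_triple hab hac hbc]
    simp only [thv, if_true, hab, hac, hbc, if_false, hbc.symm]
    ring

theorem tri_ext {a b c : G × ℕ} (hab : a ≠ b) (hac : a ≠ c) (hbc : b ≠ c)
    (α β δ : Path y0 y0) (h : (α.trans β).Homotopic δ) :
    ∃ F : Spx ({a, b, c} : Finset (G × ℕ)) → Y, Continuous F ∧ ∀ x : Spx ({a, b, c} : Finset (G × ℕ)),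
      (x.1 b = 0 → F x = δ.extend (x.1 c)) ∧ (x.1 c = 0 → F x = α.extend (x.1 b)) ∧
      (x.1 a = 0 → F x = β.extend (x.1 c)) := by
  obtain ⟨K⟩ := h
  have hval : ∀ z : unitInterval × unitInterval,
      thv a b c z b = (1 - (z.1 : ℝ)) * (2 * min (z.2 : ℝ) (1 - z.2)) ∧
      thv a b c z c = (z.2 : ℝ) - (1 - (z.1 : ℝ)) * min (z.2 : ℝ) (1 - z.2) ∧
      thv a b c z a = 1 - (z.2 : ℝ) - (1 - (z.1 : ℝ)) * min (z.2 : ℝ) (1 - z.2) := by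
    intro z
    simp [thv, hab, hac, hbc.symm]
  have hsurj : Function.Surjective (fun z => (⟨thv a b c z, thv_mem hab hac hbc z⟩ :
      Spx ({a, b, c} : Finset (G × ℕ)))) := by
    rintro ⟨x, hx⟩
    have hsum := hx.2.2
    rw [sum_triple hab hac hbc] at hsum
    have ha := hx.1 a
    have hb := hx.1 b
    have hc := hx.1 c
    set t := x c + x b / 2 with ht
    set m := 2 * min t (1 - t) with hm
    have hmb : x b ≤ m := by
      rw [hm]
      rcases min_choice t (1 - t) with h | h <;> rw [h] <;> linarith
    have hs1 : x b / m ≤ 1 := div_le_one_of_le₀ hmb (hb.trans hmb)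
    have hs0 : 0 ≤ x b / m := div_nonneg hb (hb.trans hmb)
    have hmul : x b / m * m = x b := by
      rcases eq_or_ne m 0 with h0 | h0
      · rw [h0] at hmb ⊢
        simp
        linarith
      · field_simp
    refine ⟨⟨⟨1 - x b / m, by linarith, by linarith⟩, ⟨t, by linarith, by linarith⟩⟩, ?_⟩
    apply Subtype.ext
    funext p
    obtain ⟨h1, h2, h3⟩ := hval ⟨⟨1 - x b / m, by linarith, by linarith⟩, ⟨t, by linarith, by linarith⟩⟩
    dsimp only at h1 h2 h3
    by_cases hpb : p = b
    · rw [hpb]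
      change thv a b c _ b = x b
      rw [h1]
      linear_combination hmul
    by_cases hpc : p = c
    · rw [hpc]
      change thv a b c _ c = x c
      rw [h2]
      linear_combination -hmul/2 + ht
    by_cases hpa : p = a
    · rw [hpa]
      change thv a b c _ a = x a
      rw [h3]
      linear_combination -hmul/2 - ht - hsum
    · change thv a b c _ p = x p
      rw [hx.2.1 p (by simp [hpa, hpb, hpc])]
      simp [thv, hpb, hpc, hpa]
  obtain ⟨F, hF1, hF2⟩ := descend (fun z => (⟨thv a b c z, thv_mem hab hac hbc z⟩ :
      Spx ({a, b, c} : Finset (G × ℕ)))) ((thv_cont a b c).subtype_mk _) hsurj (fun z => K z)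
      K.continuous (by
    rintro z z' h
    have hv : thv a b c z = thv a b c z' := congrArg Subtype.val h
    have hb : thv a b c z b = thv a b c z' b := by rw [hv]
    have hc : thv a b c z c = thv a b c z' c := by rw [hv]
    rw [(hval _).1, (hval _).1] at hb
    rw [(hval _).2.1, (hval _).2.1] at hc
    have ht : (z.2 : ℝ) = z'.2 := by linarith
    have ht' : z.2 = z'.2 := Subtype.ext ht
    obtain ⟨s, t⟩ := z
    obtain ⟨s', t'⟩ := z'
    dsimp only at ht' ht hb ⊢
    subst ht'
    by_cases hm : min (t : ℝ) (1 - t) = 0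
    · have : t = 0 ∨ t = 1 := by
        rcases min_choice (t : ℝ) (1 - t) with h | h
        · left; apply Subtype.ext; rw [← h, hm]; rfl
        · right; apply Subtype.ext; change (t : ℝ) = 1; linarith
      rcases this with rfl | rfl
      · rw [K.source, K.source]
      · rw [K.target, K.target]
    · have : (s : ℝ) = s' := by
        apply mul_right_cancel₀ hm
        linarith
      rw [Subtype.ext this])
  refine ⟨F, hF1, fun x => ?_⟩
  obtain ⟨⟨s, t⟩, rfl⟩ := hsurj x
  rw [hF2]
  obtain ⟨h1, h2, h3⟩ := hval (s, t)
  dsimp only at h1 h2 h3 ⊢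
  have ht0 := t.2.1
  have ht1 := t.2.2
  have hs0 := s.2.1
  have hs1 := s.2.2
  have K0 : ∀ t, K (0, t) = (α.trans β) t := fun t => K.apply_zero t
  have K1 : ∀ t, K (1, t) = δ t := fun t => K.apply_one t
  rw [h1, h2, h3]
  refine ⟨fun h => ?_, fun h => ?_, fun h => ?_⟩
  · have h' : (1 - (s : ℝ)) * min (t : ℝ) (1 - t) = 0 := by linarith
    rw [h', sub_zero]
    rw [Path.extend_apply _ t.2]
    rcases mul_eq_zero.1 h' with h4 | hm
    · have : s = 1 := Subtype.ext (by change (s : ℝ) = 1; linarith)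
      rw [this, K1]
    · rcases min_choice (t : ℝ) (1 - t) with h | h
      · have : t = 0 := Subtype.ext (by change (t : ℝ) = 0; linarith)
        subst this
        rw [K.source]
        exact δ.source.symm
      · have : t = 1 := Subtype.ext (by change (t : ℝ) = 1; linarith)
        subst this
        rw [K.target]
        exact δ.target.symm
  · have hle : (t : ℝ) ≤ 1/2 ∧ (s = 0 ∨ t = 0) := by
      rcases min_choice (t : ℝ) (1 - t) with h5 | h5 <;> rw [h5] at h
      · have hmm := min_le_right (t : ℝ) (1 - t)
        rw [h5] at hmm
        refine ⟨by linarith, ?_⟩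
        have : (s : ℝ) * t = 0 := by linarith
        rcases mul_eq_zero.1 this with h | h
        · exact Or.inl (Subtype.ext h)
        · exact Or.inr (Subtype.ext h)
      · have hmm := min_le_left (t : ℝ) (1 - t)
        rw [h5] at hmm
        have : (t : ℝ) ≤ 1/2 := by nlinarith
        refine ⟨this, ?_⟩
        left
        apply Subtype.ext
        change (s : ℝ) = 0
        nlinarith
    rcases hle with ⟨hle, rfl | rfl⟩
    · rw [K0, Path.trans_apply, dif_pos hle, min_eq_left (by linarith)]
      rw [Path.extend_apply _ (show (1 - ((0 : unitInterval) : ℝ)) * (2 * (t : ℝ)) ∈ unitInterval by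
        simp; constructor <;> linarith)]
      congr 1
      apply Subtype.ext
      simp
    · rw [K.source]
      simp
  · have hle : (1 / 2 : ℝ) ≤ t ∧ (s = 0 ∨ t = 1) := by
      rcases min_choice (t : ℝ) (1 - t) with h5 | h5 <;> rw [h5] at h
      · have hmm := min_le_right (t : ℝ) (1 - t)
        rw [h5] at hmm
        have : (1 / 2 : ℝ) ≤ t := by nlinarith
        refine ⟨this, ?_⟩
        left
        apply Subtype.ext
        change (s : ℝ) = 0
        nlinarith
      · have hmm := min_le_left (t : ℝ) (1 - t)
        rw [h5] at hmm
        refine ⟨by linarith, ?_⟩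
        have : (s : ℝ) * (1 - t) = 0 := by linarith
        rcases mul_eq_zero.1 this with h | h
        · exact Or.inl (Subtype.ext h)
        · exact Or.inr (Subtype.ext (by change (t : ℝ) = 1; linarith))
    rcases hle with ⟨hle, rfl | rfl⟩
    · have hx : (t : ℝ) - (1 - ((0 : unitInterval) : ℝ)) * min (t : ℝ) (1 - t) = 2 * t - 1 := by
        rw [min_eq_right (by linarith)]
        simp
        ring
      rw [hx, Path.extend_apply _ (show 2 * (t : ℝ) - 1 ∈ unitInterval by
        constructor <;> linarith), K0]
      have := Path.trans_apply α β t
      rw [this]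
      split_ifs with h6
      · have ht : (t : ℝ) = 1 / 2 := le_antisymm h6 hle
        have e1 : ∀ hh, α ⟨2 * (t : ℝ), hh⟩ = y0 := fun hh => by
          have : (⟨2 * (t : ℝ), hh⟩ : unitInterval) = 1 := Subtype.ext (by simp [ht])
          rw [this]; simp
        have e2 : ∀ hh, β ⟨2 * (t : ℝ) - 1, hh⟩ = y0 := fun hh => by
          have : (⟨2 * (t : ℝ) - 1, hh⟩ : unitInterval) = 0 := Subtype.ext (by simp [ht])
          rw [this]; simp
        rw [e1, e2]
      · rfl
    · rw [K.target]
      simp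

end Mil

namespace Mil
set_option linter.unusedSectionVars false
open scoped Classical

variable {G : Type} [Group G] {Y : Type} [TopologicalSpace Y] {y0 : Y}

/-- parametrisation of a simplex as a cone over a face -/
def conev {m : ℕ} {τ : Finset (G × ℕ)} (a0 : G × ℕ)
    (h : Metric.closedBall (0 : Fin m → ℝ) 1 ≃ₜ Spx τ)
    (z : Metric.closedBall (0 : (Fin m → ℝ) × ℝ) 1) (p : G × ℕ) : ℝ :=
  if p = a0 then 1 - (z.1.2 + 1) / 2 else (z.1.2 + 1) / 2 *
    (h ⟨z.1.1, mem_closedBall_zero_iff.2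
      ((norm_fst_le z.1).trans (mem_closedBall_zero_iff.1 z.2))⟩).1 p

theorem conev_cont {m : ℕ} {τ : Finset (G × ℕ)} (a0 : G × ℕ)
    (h : Metric.closedBall (0 : Fin m → ℝ) 1 ≃ₜ Spx τ) : Continuous (conev a0 h) := by
  refine continuous_pi fun p => ?_
  unfold conev
  split_ifs
  · fun_prop
  · refine Continuous.mul (by fun_prop) ?_
    refine (continuous_apply p).comp (continuous_subtype_val.comp (h.continuous.comp ?_))
    exact Continuous.subtype_mk (by fun_prop) _

theorem ball_snd {m : ℕ} (z : Metric.closedBall (0 : (Fin m → ℝ) × ℝ) 1) :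
    -1 ≤ z.1.2 ∧ z.1.2 ≤ 1 := by
  have := (norm_snd_le z.1).trans (mem_closedBall_zero_iff.1 z.2)
  rw [Real.norm_eq_abs] at this
  exact abs_le.1 this

theorem conev_mem {m : ℕ} {s : Finset (G × ℕ)} {a0 : G × ℕ} (ha : a0 ∈ s)
    (h : Metric.closedBall (0 : Fin m → ℝ) 1 ≃ₜ Spx (s.erase a0))
    (z : Metric.closedBall (0 : (Fin m → ℝ) × ℝ) 1) : conev a0 h z ∈ Spx s := by
  obtain ⟨h1, h2⟩ := ball_snd z
  have hx := (h ⟨z.1.1, mem_closedBall_zero_iff.2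
      ((norm_fst_le z.1).trans (mem_closedBall_zero_iff.1 z.2))⟩).2
  refine ⟨fun p => ?_, fun p hp => ?_, ?_⟩
  · unfold conev
    split_ifs
    · linarith
    · exact mul_nonneg (by linarith) (hx.1 p)
  · unfold conev
    rw [if_neg (fun h1 : p = a0 => hp (by rw [h1]; exact ha)), hx.2.1 p (fun h => hp (Finset.mem_of_mem_erase h)), mul_zero]
  · rw [← Finset.add_sum_erase _ _ ha]
    have : ∑ p ∈ s.erase a0, conev a0 h z p = ∑ p ∈ s.erase a0, (z.1.2 + 1) / 2 *
        (h ⟨z.1.1, mem_closedBall_zero_iff.2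
        ((norm_fst_le z.1).trans (mem_closedBall_zero_iff.1 z.2))⟩).1 p :=
      Finset.sum_congr rfl fun p hp => if_neg (Finset.ne_of_mem_erase hp)
    rw [this, ← Finset.mul_sum, hx.2.2]
    simp [conev]

theorem cone_ext {m : ℕ} (hY : Subsingleton (HomotopyGroup.Pi m Y y0)) {s : Finset (G × ℕ)}
    (hs : s.card = m + 2) (f : Spx s → Y) (hf : ContinuousOn f {x | ∃ p ∈ s, x.1 p = 0})
    (hv : ∀ p ∈ s, ∀ x : Spx s, x.1 p = 1 → f x = y0) :
    ∃ F : Spx s → Y, Continuous F ∧ ∀ x : Spx s, (∃ p ∈ s, x.1 p = 0) → F x = f x := by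
  obtain ⟨a0, ha⟩ : s.Nonempty := Finset.card_pos.1 (by omega)
  have hτ : (s.erase a0).card = m + 1 := by rw [Finset.card_erase_of_mem ha]; omega
  obtain ⟨h, hh⟩ := simplexHomeo (V := Fin m → ℝ) (ContinuousLinearEquiv.refl ℝ (Fin m → ℝ)) hτ
  obtain ⟨b0, hb0⟩ : (s.erase a0).Nonempty := Finset.card_pos.1 (by omega)
  let Q : Metric.closedBall (0 : (Fin m → ℝ) × ℝ) 1 → Spx s := fun z => ⟨_, conev_mem ha h z⟩
  have hQc : Continuous Q := (conev_cont a0 h).subtype_mk _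
  have hfst : ∀ z : Metric.closedBall (0 : (Fin m → ℝ) × ℝ) 1,
      z.1.1 ∈ Metric.closedBall (0 : Fin m → ℝ) 1 := fun z => mem_closedBall_zero_iff.2
        ((norm_fst_le z.1).trans (mem_closedBall_zero_iff.1 z.2))
  have Qa : ∀ z, (Q z).1 a0 = 1 - (z.1.2 + 1) / 2 := fun z => if_pos rfl
  have Qn : ∀ z p, p ≠ a0 → (Q z).1 p = (z.1.2 + 1) / 2 * (h ⟨z.1.1, hfst z⟩).1 p :=
    fun z p hp => if_neg hp
  have hbd : ∀ z, ‖z.1‖ = 1 ↔ ∃ p ∈ s, (Q z).1 p = 0 := by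
    intro z
    obtain ⟨h1, h2⟩ := ball_snd z
    have hz := mem_closedBall_zero_iff.1 z.2
    have hy := hh ⟨z.1.1, hfst z⟩
    have hy1 : ‖z.1.1‖ ≤ 1 := (norm_fst_le z.1).trans hz
    constructor
    · intro hn
      rw [Prod.norm_def] at hn
      rcases max_choice ‖z.1.1‖ ‖z.1.2‖ with h5 | h5 <;> rw [h5] at hn
      · have : ¬ ∀ p ∈ s.erase a0, 0 < (h ⟨z.1.1, hfst z⟩).1 p := by
          rw [← hy]
          dsimp only
          linarith
        push Not at this
        obtain ⟨p, hp, hp0⟩ := this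
        refine ⟨p, Finset.mem_of_mem_erase hp, ?_⟩
        rw [Qn z p (Finset.ne_of_mem_erase hp),
          le_antisymm hp0 ((h ⟨z.1.1, hfst z⟩).2.1 p), mul_zero]
      · rw [Real.norm_eq_abs] at hn
        rcases eq_or_eq_neg_of_abs_eq hn with h6 | h6
        · exact ⟨a0, ha, by rw [Qa, h6]; norm_num⟩
        · refine ⟨b0, Finset.mem_of_mem_erase hb0, ?_⟩
          rw [Qn z _ (Finset.ne_of_mem_erase hb0), h6]
          norm_num
    · rintro ⟨p, hp, hp0⟩
      refine le_antisymm hz ?_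
      by_cases hpa : p = a0
      · rw [hpa, Qa] at hp0
        have : z.1.2 = 1 := by linarith
        have h7 := norm_snd_le z.1
        rw [this] at h7
        simpa using h7
      · rw [Qn z p hpa] at hp0
        rcases mul_eq_zero.1 hp0 with h8 | h8
        · have : z.1.2 = -1 := by linarith
          have h7 := norm_snd_le z.1
          rw [this] at h7
          simpa using h7
        · have : ¬ ‖z.1.1‖ < 1 := fun hlt => by
            have := hy.1 hlt p (Finset.mem_erase.2 ⟨hpa, hp⟩)
            linarith
          exact (not_lt.1 this).trans (norm_fst_le z.1)
  have hsurj : Function.Surjective Q := by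
    intro x
    have hx := x.2
    have hsum := hx.2.2
    rw [← Finset.add_sum_erase _ _ ha] at hsum
    have hnn : 0 ≤ ∑ p ∈ s.erase a0, x.1 p := Finset.sum_nonneg fun p _ => hx.1 p
    have hxa := hx.1 a0
    by_cases h1 : x.1 a0 = 1
    · have hzero : ∀ p ≠ a0, x.1 p = 0 := by
        intro p hp
        by_cases hps : p ∈ s
        · exact (Finset.sum_eq_zero_iff_of_nonneg (fun p _ => hx.1 p)).1
            (show ∑ p ∈ s.erase a0, x.1 p = 0 by linarith) p (Finset.mem_erase.2 ⟨hp, hps⟩)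
        · exact hx.2.1 p hps
      refine ⟨⟨(0, -1), by rw [mem_closedBall_zero_iff, Prod.norm_def]; simp⟩, ?_⟩
      apply Subtype.ext
      funext p
      by_cases hp : p = a0
      · rw [hp, Qa, h1]; norm_num
      · rw [Qn _ p hp, hzero p hp]; norm_num
    · have hr : 0 < 1 - x.1 a0 := lt_of_le_of_ne (by linarith) fun h => h1 (by linarith)
      have hw : (fun p => if p = a0 then 0 else x.1 p / (1 - x.1 a0)) ∈ Spx (s.erase a0) := by
        refine ⟨fun p => ?_, fun p hp => ?_, ?_⟩
        · dsimp only
          split_ifs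
          · exact le_rfl
          · exact div_nonneg (hx.1 p) hr.le
        · dsimp only
          split_ifs with h3
          · rfl
          · rw [hx.2.1 p fun h => hp (Finset.mem_erase.2 ⟨h3, h⟩), zero_div]
        · rw [Finset.sum_congr rfl fun p hp => if_neg (Finset.ne_of_mem_erase hp),
            ← Finset.sum_div, div_eq_one_iff_eq hr.ne']
          linarith
      have hyn := mem_closedBall_zero_iff.1 (h.symm ⟨_, hw⟩).2
      refine ⟨⟨((h.symm ⟨_, hw⟩).1, 2 * (1 - x.1 a0) - 1), ?_⟩, ?_⟩
      · rw [mem_closedBall_zero_iff, Prod.norm_def]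
        refine max_le hyn ?_
        rw [Real.norm_eq_abs, abs_le]
        dsimp only
        constructor <;> linarith
      apply Subtype.ext
      funext p
      by_cases hp : p = a0
      · rw [hp, Qa]; ring
      · rw [Qn _ p hp]
        dsimp only
        rw [Subtype.coe_eta, h.apply_symm_apply]
        dsimp only
        rw [if_neg hp]
        field_simp
        ring
  have hsb : ∀ z : Metric.sphere (0 : (Fin m → ℝ) × ℝ) 1, ∃ p ∈ s,
      (Q ⟨z.1, Metric.sphere_subset_closedBall z.2⟩).1 p = 0 := fun z =>
    (hbd ⟨z.1, Metric.sphere_subset_closedBall z.2⟩).1 (mem_sphere_zero_iff_norm.1 z.2)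
  have hfc : Continuous fun z : Metric.sphere (0 : (Fin m → ℝ) × ℝ) 1 =>
      f (Q ⟨z.1, Metric.sphere_subset_closedBall z.2⟩) :=
    hf.comp_continuous (hQc.comp (Continuous.subtype_mk continuous_subtype_val _)) hsb
  obtain ⟨F, hF⟩ := extend_aspherical hY ⟨_, hfc⟩ (by
    intro z hz
    refine hv a0 ha _ ?_
    rw [Qa]
    dsimp only
    rw [hz]
    norm_num)
  have hF' : ∀ z, (∃ p ∈ s, (Q z).1 p = 0) → F z = f (Q z) := fun z hz =>
    hF z.1 (mem_sphere_zero_iff_norm.2 ((hbd z).2 hz))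
  obtain ⟨F', hc, hF2⟩ := descend Q hQc hsurj F F.continuous (by
    intro z z' hzz
    by_cases hb : ∃ p ∈ s, (Q z).1 p = 0
    · rw [hF' z hb, hF' z' (hzz ▸ hb), hzz]
    · have hs : z.1.2 = z'.1.2 := by
        have h1 : (Q z).1 a0 = (Q z').1 a0 := by rw [hzz]
        rw [Qa, Qa] at h1
        linarith
      have hr : (z.1.2 + 1) / 2 ≠ 0 := fun h0 => hb ⟨b0, Finset.mem_of_mem_erase hb0, by
        rw [Qn z _ (Finset.ne_of_mem_erase hb0), h0, zero_mul]⟩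
      have hy : h ⟨z.1.1, hfst z⟩ = h ⟨z'.1.1, hfst z'⟩ := by
        apply Subtype.ext
        funext p
        by_cases hp : p = a0
        · rw [(h ⟨z.1.1, hfst z⟩).2.2.1 p (by simp [hp]), (h ⟨z'.1.1, hfst z'⟩).2.2.1 p (by simp [hp])]
        · have h1 : (Q z).1 p = (Q z').1 p := by rw [hzz]
          rw [Qn z p hp, Qn z' p hp, ← hs] at h1
          exact mul_left_cancel₀ hr h1
      have hy' := congrArg Subtype.val (h.injective hy)
      have : z = z' := Subtype.ext (Prod.ext hy' hs)
      rw [this])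
  refine ⟨F', hc, fun x hx => ?_⟩
  obtain ⟨z, rfl⟩ := hsurj x
  rw [hF2, hF' z hx]

end Mil

namespace Mil
set_option linter.unusedSectionVars false
open scoped Classical

variable {G : Type} [Group G] {Y : Type} [TopologicalSpace Y] {y0 : Y}

theorem pi_trans (p q : Path y0 y0) : pathToPi1 (Path.Homotopic.Quotient.mk (p.trans q)) =
    pathToPi1 (Path.Homotopic.Quotient.mk q) * pathToPi1 (Path.Homotopic.Quotient.mk p) := rfl

theorem pi_symm (p : Path y0 y0) : pathToPi1 (Path.Homotopic.Quotient.mk p.symm) =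
    (pathToPi1 (Path.Homotopic.Quotient.mk p))⁻¹ := rfl

theorem pi_homotopic {p q : Path y0 y0} (h : pathToPi1 (Path.Homotopic.Quotient.mk p) =
    pathToPi1 (Path.Homotopic.Quotient.mk q)) : p.Homotopic q := by
  have : (Path.Homotopic.Quotient.mk p) = (Path.Homotopic.Quotient.mk q) := by
    have := congrArg (FundamentalGroup.toPath (X := TopCat.of Y)) h
    exact this
  exact Quotient.exact this

theorem exists_loops (e : FundamentalGroup Y y0 ≃* G) : ∃ lp : G → Path y0 y0,
    ∀ g, e (pathToPi1 (Path.Homotopic.Quotient.mk (lp g))) = g := by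
  have : ∀ g : G, ∃ p : Path y0 y0, e (pathToPi1 (Path.Homotopic.Quotient.mk p)) = g := by
    intro g
    obtain ⟨x, rfl⟩ := e.surjective g
    obtain ⟨p, hp⟩ := Quotient.exists_rep (FundamentalGroup.toPath (X := TopCat.of Y) x)
    refine ⟨p, congrArg e ?_⟩
    exact congrArg (FundamentalGroup.fromPath (X := TopCat.of Y)) hp
  choose lp h using this
  exact ⟨lp, h⟩

theorem supp_vx (p : G × ℕ) : (vx p).supp = {p} := by
  ext q
  rw [EM.mem_supp]
  simp [vx]

theorem supp_of_one {x : EM G} {p : G × ℕ} (h : x.val p = 1) : x.supp = {p} := by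
  have hp : p ∈ x.supp := by rw [EM.mem_supp, h]; norm_num
  have h1 := x.sum_supp
  rw [← Finset.add_sum_erase _ _ hp, h] at h1
  have h2 : ∑ q ∈ x.supp.erase p, x.val q = 0 := by linarith
  rw [Finset.sum_eq_zero_iff_of_nonneg (fun q _ => x.nonneg q)] at h2
  ext q
  rw [Finset.mem_singleton]
  constructor
  · intro hq
    by_contra hne
    exact (EM.mem_supp.1 hq) (h2 q (Finset.mem_erase.2 ⟨hne, hq⟩))
  · rintro rfl; exact hp

theorem exists_map_aspherical (asph : ∀ n : ℕ, 2 ≤ n → Subsingleton (HomotopyGroup.Pi n Y y0))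
    (lp : G → Path y0 y0) (e : FundamentalGroup Y y0 ≃* G)
    (hlp : ∀ g, e (pathToPi1 (Path.Homotopic.Quotient.mk (lp g))) = g) :
    ∃ f : EM G → Y, Continuous f ∧ (∀ (g : G) (x : EM G), f (g • x) = f x) ∧
      ∀ x : EM G, x.supp.card ≤ 2 → f x = fz lp x := by
  letI : MulAction G Y := { smul := fun _ y => y, one_smul := fun _ => rfl, mul_smul := fun _ _ _ => rfl }
  haveI : ContinuousConstSMul G Y := ⟨fun g => continuous_id⟩
  refine equiv_ext (G := G) (Z := Y) 2 (fz lp) ⟨fun g x _ => fz_smul lp g x, fun s hs => fz_cont lp s hs⟩ ?_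
  intro n hn f hf hf0 s hs
  rcases Nat.lt_or_ge n 3 with h3 | h3
  · obtain rfl : n = 2 := by omega
    obtain ⟨a, b, c, hab, hbc, habc⟩ := exists_triple s.2 hs
    have h1 : a ≠ b := fun h => by rw [h] at hab; exact lt_irrefl _ hab
    have h2 : b ≠ c := fun h => by rw [h] at hbc; exact lt_irrefl _ hbc
    have h3 : a ≠ c := fun h => by rw [h] at hab; exact lt_irrefl _ (hab.trans hbc)
    obtain ⟨s, hchn⟩ := s
    dsimp only at habc hs ⊢
    subst habc
    obtain ⟨F, hF, hb⟩ := tri_ext h1 h3 h2 (lp (b.1⁻¹ * a.1)) (lp (c.1⁻¹ * b.1)) (lp (c.1⁻¹ * a.1)) (by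
      apply pi_homotopic
      apply e.injective
      rw [pi_trans, map_mul, hlp, hlp, hlp]
      group)
    refine ⟨F, hF, fun x hx => ?_⟩
    have hsub := supp_inc_subset (s := ⟨_, hchn⟩) x
    have hno : ∀ p, x.1 p = 0 → p ∉ (inc ⟨_, hchn⟩ x).supp := fun p hp h => (EM.mem_supp.1 h) hp
    have key : ∀ u v : G × ℕ, u.2 < v.2 → (∀ q ∈ (inc ⟨_, hchn⟩ x).supp, q = u ∨ q = v) →
        f (inc ⟨_, hchn⟩ x) = (lp (v.1⁻¹ * u.1)).extend (x.1 v) := by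
      intro u v huv hq
      have hs2 : (inc ⟨_, hchn⟩ x).supp ⊆ {u, v} := fun q h => by simpa using hq q h
      rw [hf0 _ ((Finset.card_le_card hs2).trans Finset.card_le_two)]
      exact fz_edge lp huv hs2
    have hsub' : ∀ q ∈ (inc ⟨_, hchn⟩ x).supp, q = a ∨ q = b ∨ q = c := fun q hq => by
      simpa using hsub hq
    obtain ⟨p, hp, hp0⟩ := hx
    simp only [Finset.mem_insert, Finset.mem_singleton] at hp
    rcases hp with rfl | rfl | rfl
    · rw [(hb x).2.2 hp0]
      refine (key b c hbc fun q hq => ?_).symm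
      rcases hsub' q hq with rfl | h | h
      · exact absurd hq (hno _ hp0)
      · exact Or.inl h
      · exact Or.inr h
    · rw [(hb x).1 hp0]
      refine (key a c (hab.trans hbc) fun q hq => ?_).symm
      rcases hsub' q hq with h | rfl | h
      · exact Or.inl h
      · exact absurd hq (hno _ hp0)
      · exact Or.inr h
    · rw [(hb x).2.1 hp0]
      refine (key a b hab fun q hq => ?_).symm
      rcases hsub' q hq with h | h | rfl
      · exact Or.inl h
      · exact Or.inr h
      · exact absurd hq (hno _ hp0)
  · obtain ⟨m, rfl⟩ : ∃ m, n = m + 1 := ⟨n - 1, by omega⟩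
    refine cone_ext (asph m (by omega)) hs _ (good_boundary hf s hs) ?_
    intro p hp x hx
    have hsp : (inc s x).supp = {p} := supp_of_one hx
    rw [hf0 _ (by rw [hsp]; simp)]
    exact fz_vertex lp hsp

/-- an edge of the complex -/
def ept {a b : G × ℕ} (hab : a.2 < b.2) (t : unitInterval) : EM G :=
  ⟨fun q => if q = b then (t : ℝ) else if q = a then 1 - (t : ℝ) else 0, {a, b}, by
    have hne : a.2 ≠ b.2 := hab.ne
    intro p hp q hq h
    simp only [Finset.mem_insert, Finset.mem_singleton] at hp hq
    rcases hp with rfl | rfl <;> rcases hq with rfl | rfl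
    · rfl
    · exact absurd h hne
    · exact absurd h.symm hne
    · rfl, by
    have hne : a ≠ b := fun h => by rw [h] at hab; exact lt_irrefl _ hab
    refine ⟨fun q => ?_, fun q hq => ?_, ?_⟩
    · dsimp only
      split_ifs
      · exact t.2.1
      · linarith [t.2.2]
      · exact le_rfl
    · simp only [Finset.mem_insert, Finset.mem_singleton, not_or] at hq
      simp [hq.1, hq.2]
    · rw [Finset.sum_pair hne]
      simp [hne]⟩

theorem ept_supp {a b : G × ℕ} (hab : a.2 < b.2) (t : unitInterval) : (ept hab t).supp ⊆ {a, b} := by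
  intro q hq
  rw [EM.mem_supp] at hq
  by_contra h
  simp only [Finset.mem_insert, Finset.mem_singleton, not_or] at h
  simp [ept, h.1, h.2] at hq

theorem ept_cont {a b : G × ℕ} (hab : a.2 < b.2) : Continuous (ept hab) := by
  have hch : Chn ({a, b} : Finset (G × ℕ)) := by
    have hne : a.2 ≠ b.2 := hab.ne
    intro p hp q hq h
    simp only [Finset.mem_insert, Finset.mem_singleton] at hp hq
    rcases hp with rfl | rfl <;> rcases hq with rfl | rfl
    · rfl
    · exact absurd h hne
    · exact absurd h.symm hne
    · rfl
  have : ept hab = fun t => inc ⟨{a, b}, hch⟩ ⟨(ept hab t).val, EM.mem_Spx_iff.2 (ept_supp hab t)⟩ :=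
    funext fun t => EM.ext' rfl
  rw [this]
  refine (continuous_inc _).comp (Continuous.subtype_mk (continuous_pi fun p => ?_) _)
  simp only [ept]
  split_ifs <;> fun_prop

/-- an edge as a path -/
def epath {a b : G × ℕ} (hab : a.2 < b.2) : Path (vx a) (vx b) where
  toFun := ept hab
  continuous_toFun := ept_cont hab
  source' := by
    have hne : a ≠ b := fun h => by rw [h] at hab; exact lt_irrefl _ hab
    apply EM.ext'
    funext q
    simp only [ept, vx]
    by_cases h : q = b
    · subst h; simp [hne.symm]
    · simp [h]
  target' := by
    apply EM.ext'
    funext q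
    simp [ept, vx]

/-- the comparison map to an arbitrary model of the classifying space -/
theorem exists_map_model (asph : ∀ n : ℕ, 2 ≤ n → Subsingleton (HomotopyGroup.Pi n Y y0))
    (e : FundamentalGroup Y y0 ≃* G) :
    ∃ f : EM G → Y, Continuous f ∧ (∀ (g : G) (x : EM G), f (g • x) = f x) ∧
      f (vx (1, 0)) = y0 ∧ ∀ (g : G) (P : Path (vx ((1 : G), 0)) (vx (g, 0))) (γ : Path y0 y0),
        (∀ t, f (P t) = γ t) → e (pathToPi1 (Path.Homotopic.Quotient.mk γ)) = g⁻¹ := by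
  obtain ⟨lp, hlp⟩ := exists_loops e
  obtain ⟨f, hf, hinv, hfz⟩ := exists_map_aspherical asph lp e hlp
  have hvx : ∀ p, f (vx p) = y0 := fun p => by
    rw [hfz _ (by rw [supp_vx]; simp)]
    exact fz_vertex lp (supp_vx p)
  refine ⟨f, hf, hinv, hvx _, fun g P γ hγ => ?_⟩
  have h01 : ∀ g h : G, ((g, 0) : G × ℕ).2 < ((h, 1) : G × ℕ).2 := fun g h => Nat.zero_lt_one
  have hedge : ∀ (g : G) (t : unitInterval), f (epath (h01 g 1) t) = lp g t := by
    intro g t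
    change f (ept (h01 g 1) t) = _
    rw [hfz _ ((Finset.card_le_card (ept_supp _ t)).trans Finset.card_le_two),
      fz_edge lp (h01 g 1) (ept_supp _ t)]
    have : (ept (h01 g 1) t).val (1, 1) = t := if_pos rfl
    rw [this]
    simp
  have hom : P.Homotopic ((epath (h01 1 1)).trans (epath (h01 g 1)).symm) := paths_homotopic_EM _ _
  have h3 : γ.Homotopic ((lp 1).trans (lp g).symm) := by
    obtain ⟨K⟩ := hom
    have e1 : ∀ t, f (((epath (h01 1 1)).trans (epath (h01 g 1)).symm) t) =
        ((lp 1).trans (lp g).symm) t := by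
      intro t
      rw [Path.trans_apply, Path.trans_apply]
      split_ifs
      · exact hedge _ _
      · rw [Path.symm_apply, Path.symm_apply]
        exact hedge _ _
    refine ⟨⟨⟨⟨fun z => f (K z), hf.comp K.continuous⟩, fun t => ?_, fun t => ?_⟩, ?_⟩⟩
    · change f (K (0, t)) = γ t
      rw [← hγ]
      exact congrArg f (K.apply_zero t)
    · change f (K (1, t)) = _
      refine Eq.trans ?_ (e1 t)
      exact congrArg f (K.apply_one t)
    · rintro s t (rfl | rfl)
      · change f (K (s, 0)) = γ 0
        rw [K.source, γ.source, hvx]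
      · change f (K (s, 1)) = γ 1
        rw [K.target, γ.target, hvx]
  have h4 : Path.Homotopic.Quotient.mk γ = Path.Homotopic.Quotient.mk ((lp 1).trans (lp g).symm) :=
    Quotient.sound h3
  rw [h4, pi_trans, pi_symm, map_mul, map_inv, hlp, hlp, mul_one]

end Mil

namespace Mil
set_option linter.unusedSectionVars false
open scoped Classical

variable {G : Type} [Group G]

theorem mem_of_sInf_le {S : Set ℕ∞} {n : ℕ} (h : sInf S ≤ n) : ∃ c ∈ S, c ≤ n := by
  rcases S.eq_empty_or_nonempty with rfl | hne
  · rw [sInf_empty] at h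
    exact absurd (top_le_iff.1 h) (ENat.coe_ne_top n)
  · exact ⟨_, csInf_mem hne, h⟩

theorem cover_of_model (Y : ClassifyingModel G) {F : Set (Subgroup G)} (U : Set Y.space) (f : EM G → Y.space)
    (hf : Continuous f) (hinv : ∀ (g : G) (x : EM G), f (g • x) = f x)
    (h0 : f (vx (1, 0)) = Y.basepoint)
    (hp : ∀ (g : G) (P : Path (vx ((1 : G), 0)) (vx (g, 0))) (γ : Path Y.basepoint Y.basepoint),
        (∀ t, f (P t) = γ t) → Y.iso (pathToPi1 (Path.Homotopic.Quotient.mk γ)) = g⁻¹)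
    (hU : FCoverCondition Y.basepoint Y.iso F U) (x : EM G) (hx : f x ∈ U) :
    ∃ H ∈ F, ∀ (g : G) (P : Path x (g • x)), (∀ t, f (P t) ∈ U) → g ∈ H := by
  let Q : Path (vx ((1 : G), 0)) x := PathConnectedSpace.somePath _ _
  let q : Path Y.basepoint (f x) := (Q.map hf).cast h0.symm rfl
  obtain ⟨H, hH, hh⟩ := hU (f x) hx q
  refine ⟨H, hH, fun g P hP => ?_⟩
  let p : Path (f x) (f x) := (P.map hf).cast rfl (hinv g x).symm
  have h1 := hh p hP
  have hc : Continuous (fun x : EM G => g • x) := continuous_const_smul g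
  have hend : vx (g, 0) = g • vx ((1 : G), 0) := by
    rw [smul_vx]
    congr 1
    apply Prod.ext <;> simp [ve]
  have h2 := hp g ((Q.trans (P.trans (Q.map hc).symm)).cast rfl hend) (q.trans (p.trans q.symm)) (by
      intro t
      simp only [Path.cast_coe, Path.trans_apply]
      split_ifs
      · rfl
      · rfl
      · simp only [Path.symm_apply, Path.map_coe, Function.comp_apply, hinv]
        rfl)
  have h3 : Y.iso (pathToPi1 (Path.Homotopic.Quotient.mk (q.trans (p.trans q.symm)))) ∈ H := h1
  rw [h2] at h3
  simpa using h3

/-- converse of `catGroup_le` -/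
theorem cover_of_catGroup_le {F : Set (Subgroup G)} {n : ℕ} (h : catGroup G F ≤ n) :
    ∃ V : Fin (n + 1) → Set (EM G), (∀ i, IsOpen (V i)) ∧
      (∀ i (g : G), ∀ x ∈ V i, g • x ∈ V i) ∧ (∀ x, ∃ i, x ∈ V i) ∧
      ∀ i, ∀ x ∈ V i, ∃ H ∈ F, ∀ (g : G) (P : Path x (g • x)), (∀ t, P t ∈ V i) → g ∈ H := by
  obtain ⟨c, ⟨Y, rfl⟩, hY⟩ := mem_of_sInf_le h
  obtain ⟨c, ⟨n', rfl, U, hU1, hU2, hU3⟩, hn⟩ := mem_of_sInf_le hY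
  have hn' : n' ≤ n := by exact_mod_cast hn
  obtain ⟨f, hf, hinv, h0, hp⟩ := exists_map_model Y.aspherical Y.iso
  refine ⟨fun j => f ⁻¹' U ⟨min j n', by omega⟩, fun j => (hU1 _).preimage hf, ?_, ?_, ?_⟩
  · intro i g x hx
    change f (g • x) ∈ U _
    rw [hinv]
    exact hx
  · intro x
    obtain ⟨i, hi⟩ := hU2 (f x)
    refine ⟨⟨i, by omega⟩, ?_⟩
    have : (⟨min i.1 n', by omega⟩ : Fin (n' + 1)) = i := Fin.ext (by simp; omega)
    change f x ∈ U _
    rw [this]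
    exact hi
  · intro i x hx
    exact cover_of_model Y _ f hf hinv h0 hp (hU3 _) x hx

/-! ### Functoriality -/

section emap
variable {S T : Type} (φ : S → T)

/-- the map on vertices -/
def vm (p : S × ℕ) : T × ℕ := (φ p.1, p.2)

theorem chn_image {s : Finset (S × ℕ)} (hs : Chn s) : Chn (s.image (vm φ)) := by
  intro a ha b hb h
  obtain ⟨a', ha', rfl⟩ := Finset.mem_image.1 ha
  obtain ⟨b', hb', rfl⟩ := Finset.mem_image.1 hb
  rw [hs a' ha' b' hb' h]

/-- pushforward of weights -/
def pushv (s : Finset (S × ℕ)) (x : S × ℕ → ℝ) (q : T × ℕ) : ℝ :=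
  ∑ p ∈ s, if vm φ p = q then x p else 0

theorem pushv_mem {s : Finset (S × ℕ)} {x : S × ℕ → ℝ} (hx : x ∈ Spx s) :
    pushv φ s x ∈ Spx (s.image (vm φ)) := by
  refine ⟨fun q => Finset.sum_nonneg fun p _ => ?_, fun q hq => Finset.sum_eq_zero fun p hp => ?_, ?_⟩
  · split_ifs
    · exact hx.1 p
    · exact le_rfl
  · rw [if_neg]
    rintro rfl
    exact hq (Finset.mem_image_of_mem _ hp)
  · unfold pushv
    rw [Finset.sum_comm]
    refine Eq.trans (Finset.sum_congr rfl fun p hp => ?_) hx.2.2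
    rw [Finset.sum_ite_eq, if_pos (Finset.mem_image_of_mem _ hp)]

/-- pushforward map of complexes -/
def emap (x : EM S) : EM T := ⟨pushv φ x.supp x.val, x.supp.image (vm φ), chn_image φ x.supp_chn,
  pushv_mem φ (EM.mem_Spx_iff.2 (Finset.Subset.refl _))⟩

theorem pushv_supp (x : EM S) {s : Finset (S × ℕ)} (h : x.supp ⊆ s) :
    pushv φ x.supp x.val = pushv φ s x.val := by
  funext q
  refine Finset.sum_subset h fun p _ hp => ?_
  have : x.val p = 0 := by
    rw [EM.mem_supp, not_not] at hp
    exact hp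
  rw [this, ite_self]

theorem emap_cont : Continuous (emap φ) := by
  rw [continuous_iff_inc]
  intro s
  have : (fun x => emap φ (inc s x)) = fun x : Spx s.1 =>
      inc ⟨s.1.image (vm φ), chn_image φ s.2⟩ ⟨pushv φ s.1 x.1, pushv_mem φ x.2⟩ := by
    funext x
    apply EM.ext'
    exact pushv_supp φ (inc s x) (supp_inc_subset x)
  first
  | rw [this]
  | (change Continuous (fun x => emap φ (inc s x)); rw [this])
  refine (continuous_inc _).comp (Continuous.subtype_mk (continuous_pi fun q => ?_) _)
  unfold pushv
  refine continuous_finsetSum _ fun p _ => ?_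
  split_ifs
  · exact (continuous_apply p).comp continuous_subtype_val
  · exact continuous_const

end emap

theorem emap_equiv {K : Subgroup G} (ρ : G → K) (hρ : ∀ (k : K) (g : G), ρ (k * g) = k * ρ g)
    (k : K) (x : EM G) : emap ρ ((k : G) • x) = k • emap ρ x := by
  apply EM.ext'
  funext q
  rw [smul_val]
  change pushv ρ ((k : G) • x).supp ((k : G) • x).val q = pushv ρ x.supp x.val (ve k⁻¹ q)
  unfold pushv
  rw [supp_smul]
  symm
  refine Finset.sum_bij (fun p _ => ve (k : G) p) (fun p hp => ve_mem_vs hp)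
    (fun a _ b _ h => (ve (k : G)).injective h) (fun p hp => ?_) (fun p hp => ?_)
  · refine ⟨ve (k : G)⁻¹ p, mem_vs.1 hp, ?_⟩
    apply Prod.ext <;> simp [ve]
  · rw [smul_val]
    have h1 : ve (k : G)⁻¹ (ve (k : G) p) = p := by apply Prod.ext <;> simp [ve]
    rw [h1]
    have h2 : vm ρ p = ve k⁻¹ q ↔ vm ρ (ve (k : G) p) = q := by
      simp only [vm, ve_fst, ve_snd, hρ, Prod.ext_iff]
      rw [eq_inv_mul_iff_mul_eq]
    by_cases h3 : vm ρ (ve (k : G) p) = q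
    · rw [if_pos h3, if_pos (h2.2 h3)]
    · rw [if_neg h3, if_neg fun h => h3 (h2.1 h)]

theorem exists_rho (K : Subgroup G) : ∃ ρ : G → K, ∀ (k : K) (g : G), ρ (k * g) = k * ρ g := by
  -- choose representatives of right cosets
  let r : G → G := fun g => (Quotient.out (s := QuotientGroup.rightRel K) (Quotient.mk _ g))
  have hr : ∀ g, g * (r g)⁻¹ ∈ K := fun g => by
    have := Quotient.mk_out (s := QuotientGroup.rightRel K) g
    exact QuotientGroup.rightRel_apply.1 this
  have hk : ∀ (k : K) (g : G), r (k * g) = r g := fun k g => by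
    have : (Quotient.mk (QuotientGroup.rightRel K) (k * g)) = Quotient.mk _ g := by
      apply Quotient.sound
      refine QuotientGroup.rightRel_apply.2 ?_
      rw [mul_inv_rev, mul_inv_cancel_left]
      exact K.inv_mem k.2
    exact congrArg Quotient.out this
  refine ⟨fun g => ⟨g * (r g)⁻¹, hr g⟩, fun k g => Subtype.ext ?_⟩
  change (k * g) * (r (k * g))⁻¹ = k * (g * (r g)⁻¹)
  rw [hk, mul_assoc]

end Mil

namespace Mil
set_option linter.unusedSectionVars false
open scoped Classical

variable {G : Type} [Group G]

theorem pieces {F : Set (Subgroup G)} (hF : IsSubgroupFamily F) {n : ℕ} {I : Type} (K : I → Subgroup G)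
    (O : ∀ i, G ⧸ K i → Set (EM G)) (hO : ∀ i c, IsOpen (O i c))
    (hdis : ∀ i c j d x, x ∈ O i c → x ∈ O j d →
      (⟨i, c⟩ : Σ i, G ⧸ K i) = ⟨j, d⟩)
    (heq : ∀ i c (g : G) x, x ∈ O i c → g • x ∈ O i (g • c))
    (hcat : ∀ i, catGroup (K i) (restrictFamily F (K i)) ≤ n) :
    ∃ V : Fin (n + 1) → Set (EM G), (∀ j, IsOpen (V j)) ∧
      (∀ j (g : G), ∀ x ∈ V j, g • x ∈ V j) ∧ (∀ i c, ∀ x ∈ O i c, ∃ j, x ∈ V j) ∧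
      ∀ j, ∀ x ∈ V j, ∃ H ∈ F, ∀ (g : G) (P : Path x (g • x)), (∀ t, P t ∈ V j) → g ∈ H := by
  choose W hW1 hW2 hW3 hW4 using fun i => cover_of_catGroup_le (hcat i)
  choose ρ hρ using fun i => exists_rho (K i)
  have hm : ∀ i (k : K i) x, emap (ρ i) ((k : G) • x) = k • emap (ρ i) x := fun i k x =>
    emap_equiv (ρ i) (hρ i) k x
  have hmc : ∀ i, Continuous (emap (ρ i)) := fun i => emap_cont _
  let V : Fin (n + 1) → Set (EM G) := fun j =>
    {x | ∃ i, ∃ g : G, x ∈ O i (g : G ⧸ K i) ∧ emap (ρ i) (g⁻¹ • x) ∈ W i j}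
  have hVm : ∀ j x, x ∈ V j ↔ ∃ i, ∃ g : G, x ∈ O i (g : G ⧸ K i) ∧ emap (ρ i) (g⁻¹ • x) ∈ W i j :=
    fun j x => Iff.rfl
  -- well-definedness
  have hwd : ∀ i (g : G) x j, x ∈ V j → x ∈ O i (g : G ⧸ K i) → emap (ρ i) (g⁻¹ • x) ∈ W i j := by
    rintro i g x j ⟨i', g', h1, h2⟩ h3
    have h4 := hdis _ _ _ _ _ h1 h3
    obtain ⟨rfl, h5⟩ := Sigma.mk.inj h4
    have h6 : (g'⁻¹ * g) ∈ K i' := QuotientGroup.eq.1 (eq_of_heq h5)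
    have h7 := hW2 i' j (⟨_, h6⟩⁻¹ : K i') _ h2
    rw [← hm] at h7
    have h8 : ((⟨_, h6⟩⁻¹ : K i') : G) • g'⁻¹ • x = g⁻¹ • x := by
      rw [smul_smul]
      congr 1
      simp
    rwa [h8] at h7
  refine ⟨V, fun j => ?_, ?_, ?_, ?_⟩
  · have : V j = ⋃ i, ⋃ g : G, (O i (g : G ⧸ K i) ∩ (fun x => emap (ρ i) (g⁻¹ • x)) ⁻¹' W i j) := by
      ext x
      rw [hVm]
      simp
    rw [this]
    refine isOpen_iUnion fun i => isOpen_iUnion fun g => (hO _ _).inter ((hW1 _ _).preimage ?_)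
    exact (hmc i).comp (continuous_const_smul _)
  · rintro j g x ⟨i, g', h1, h2⟩
    refine ⟨i, g * g', heq i _ g x h1, ?_⟩
    rw [mul_inv_rev, mul_smul, inv_smul_smul]
    exact h2
  · intro i c x hx
    obtain ⟨g, rfl⟩ := QuotientGroup.mk_surjective c
    obtain ⟨j, hj⟩ := hW3 i (emap (ρ i) (g⁻¹ • x))
    exact ⟨j, i, g, hx, hj⟩
  · rintro j x ⟨i, g, h1, h2⟩
    obtain ⟨H', hH', hp⟩ := hW4 i j _ h2
    refine ⟨_, hF.conj_mem _ hH' g, fun h P hP => ?_⟩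
    have hstay : ∀ t, P t ∈ O i (g : G ⧸ K i) := by
      have hop : IsOpen {t | P t ∈ O i (g : G ⧸ K i)} := (hO i _).preimage P.continuous
      have hcl : IsClosed {t | P t ∈ O i (g : G ⧸ K i)} := by
        rw [← isOpen_compl_iff]
        have : {t | P t ∈ O i (g : G ⧸ K i)}ᶜ = ⋃ i', ⋃ c', ⋃ (_ : (⟨i', c'⟩ : Σ i, G ⧸ K i) ≠
            ⟨i, (g : G ⧸ K i)⟩), {t | P t ∈ O i' c'} := by
          ext t
          simp only [Set.mem_compl_iff, Set.mem_iUnion, Set.mem_ofPred_eq]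
          constructor
          · intro ht
            obtain ⟨i', g', h5, -⟩ := hP t
            refine ⟨i', g', fun hEq => ht ?_, h5⟩
            obtain ⟨rfl, h6⟩ := Sigma.mk.inj hEq
            rw [← eq_of_heq h6]
            exact h5
          · rintro ⟨i', c', hne, h5⟩ h6
            exact hne (hdis _ _ _ _ _ h5 h6)
        rw [this]
        exact isOpen_iUnion fun i' => isOpen_iUnion fun c' => isOpen_iUnion fun _ =>
          (hO i' c').preimage P.continuous
      have huniv : {t | P t ∈ O i (g : G ⧸ K i)} = Set.univ :=
        IsClopen.eq_univ ⟨hcl, hop⟩ ⟨0, by simpa using h1⟩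
      intro t
      have : t ∈ {t | P t ∈ O i (g : G ⧸ K i)} := by rw [huniv]; trivial
      exact this
    have h3 : h • x ∈ O i (g : G ⧸ K i) := by simpa using hstay 1
    have h4 := heq i _ h x h1
    have h5 := hdis _ _ _ _ _ h3 h4
    have h6 : (g : G ⧸ K i) = ((h * g : G) : G ⧸ K i) := eq_of_heq (Sigma.mk.inj h5).2
    have h7 : g⁻¹ * (h * g) ∈ K i := QuotientGroup.eq.1 h6
    have hc : Continuous (fun y : EM G => emap (ρ i) (g⁻¹ • y)) :=
      (hmc i).comp (continuous_const_smul _)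
    have hend : (⟨_, h7⟩ : K i) • emap (ρ i) (g⁻¹ • x) = emap (ρ i) (g⁻¹ • (h • x)) := by
      rw [← hm]
      congr 1
      rw [smul_smul, smul_smul]
      congr 1
      simp [mul_assoc]
    have h8 := hp ⟨_, h7⟩ ((P.map hc).cast rfl hend) (fun t => hwd i g _ j (hP t) (hstay t))
    refine ⟨g⁻¹ * (h * g), ⟨⟨_, h7⟩, h8, rfl⟩, ?_⟩
    simp [mul_assoc]

end Mil

namespace Mil
set_option linter.unusedSectionVars false
open scoped Classical

variable {G : Type} [Group G] (X : GCWComplex G)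

theorem part_inj {n : ℕ} {i j : X.cells n} {c : G ⧸ X.stab n i} {d : G ⧸ X.stab n j}
    {z w : UnitDisk n} (hz : ‖z.1‖ < 1) (hw : ‖w.1‖ < 1)
    (h : X.charMap n i c z = X.charMap n j d w) :
    (⟨i, c⟩ : Σ i, G ⧸ X.stab n i) = ⟨j, d⟩ ∧ z = w := by
  have := (X.partition (X.charMap n j d w)).unique (y₁ := ⟨n, i, c, z⟩) (y₂ := ⟨n, j, d, w⟩)
    ⟨hz, h⟩ ⟨hw, rfl⟩
  obtain ⟨-, h1⟩ := Sigma.mk.inj this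
  obtain ⟨rfl, h2⟩ := Sigma.mk.inj (eq_of_heq h1)
  obtain ⟨rfl, rfl⟩ := Prod.mk.inj (eq_of_heq h2)
  exact ⟨rfl, rfl⟩

theorem part_ne {n m : ℕ} (hnm : n ≠ m) {i : X.cells n} {j : X.cells m} {c : G ⧸ X.stab n i}
    {d : G ⧸ X.stab m j} {z : UnitDisk n} {w : UnitDisk m} (hz : ‖z.1‖ < 1) (hw : ‖w.1‖ < 1) :
    X.charMap n i c z ≠ X.charMap m j d w := by
  intro h
  have := (X.partition (X.charMap m j d w)).unique (y₁ := ⟨n, i, c, z⟩) (y₂ := ⟨m, j, d, w⟩)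
    ⟨hz, h⟩ ⟨hw, rfl⟩
  exact hnm (Sigma.mk.inj this).1

/-- the unique point of the `0`-disk -/
def pt : UnitDisk 0 := ⟨0, by simp [UnitDisk]⟩

theorem eq_pt (z : UnitDisk 0) : z = pt := Subtype.ext (Subsingleton.elim _ _)

theorem norm_pt : ‖(pt : UnitDisk 0).1‖ < 1 := by simp [pt]

/-- vertex -/
def vtx (v : X.cells 0) (c : G ⧸ X.stab 0 v) : X.space := X.charMap 0 v c pt

theorem norm_one' (z : EuclideanSpace ℝ (Fin 1)) : ‖z‖ = |z 0| := by
  rw [EuclideanSpace.norm_eq]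
  simp [Real.sqrt_sq_eq_abs]

/-- endpoints of the interval -/
def up : UnitDisk 1 := ⟨EuclideanSpace.single 0 1, by simp [UnitDisk]⟩
/-- endpoints of the interval -/
def um : UnitDisk 1 := ⟨EuclideanSpace.single 0 (-1), by simp [UnitDisk]⟩

/-- radial projection to the boundary -/
def sgz (z : UnitDisk 1) : UnitDisk 1 := if 0 < z.1 0 then up else um

theorem sgz_of_norm {z : UnitDisk 1} (hz : ‖z.1‖ = 1) : sgz z = z ∧ z.1 0 ≠ 0 := by
  rw [norm_one'] at hz
  unfold sgz
  rcases eq_or_eq_neg_of_abs_eq hz with h | h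
  · rw [h, if_pos one_pos]
    refine ⟨Subtype.ext ?_, one_ne_zero⟩
    ext i
    rw [Subsingleton.elim i 0, h]
    simp [up]
  · rw [h, if_neg (by norm_num)]
    refine ⟨Subtype.ext ?_, by norm_num⟩
    ext i
    rw [Subsingleton.elim i 0, h]
    simp [um]

theorem norm_sgz (z : UnitDisk 1) : ‖(sgz z).1‖ = 1 := by
  unfold sgz
  split_ifs <;> simp [up, um]

/-- the open star of a vertex -/
def star (p : X.space) : Set X.space :=
  {x | x = p ∨ ∃ (e : X.cells 1) (d : G ⧸ X.stab 1 e) (z : UnitDisk 1), z.1 0 ≠ 0 ∧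
    X.charMap 1 e d (sgz z) = p ∧ x = X.charMap 1 e d z}

theorem exists_vtx {e : X.cells 1} {d : G ⧸ X.stab 1 e} {z : UnitDisk 1} (hz : ‖z.1‖ = 1) :
    ∃ v c, X.charMap 1 e d z = vtx X v c := by
  obtain ⟨m, hm, j, c', w, hw, h⟩ := X.sphere_le 1 e d z hz
  obtain rfl : m = 0 := by omega
  refine ⟨j, c', ?_⟩
  rw [← h, eq_pt w]
  rfl

theorem norm_le_disk {n : ℕ} (z : UnitDisk n) : ‖z.1‖ ≤ 1 := mem_closedBall_zero_iff.1 z.2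

theorem mem_star_edge {v : X.cells 0} {c : G ⧸ X.stab 0 v} {e : X.cells 1} {d : G ⧸ X.stab 1 e}
    {z : UnitDisk 1} : X.charMap 1 e d z ∈ star X (vtx X v c) ↔
      z.1 0 ≠ 0 ∧ X.charMap 1 e d (sgz z) = vtx X v c := by
  constructor
  · have key : X.charMap 1 e d z = vtx X v c → z.1 0 ≠ 0 ∧ X.charMap 1 e d (sgz z) = vtx X v c := by
      intro h
      rcases lt_or_eq_of_le (norm_le_disk z) with h1 | h1
      · exact absurd h (part_ne X one_ne_zero h1 norm_pt)
      · rw [(sgz_of_norm h1).1]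
        exact ⟨(sgz_of_norm h1).2, h⟩
    rintro (h | ⟨e', d', z', h0, h1, h2⟩)
    · exact key h
    · rcases lt_or_eq_of_le (norm_le_disk z') with h3 | h3
      · rcases lt_or_eq_of_le (norm_le_disk z) with h4 | h4
        · obtain ⟨h5, rfl⟩ := part_inj X h4 h3 h2
          obtain ⟨rfl, h6⟩ := Sigma.mk.inj h5
          obtain rfl := eq_of_heq h6
          exact ⟨h0, h1⟩
        · obtain ⟨v', c', h5⟩ := exists_vtx X (e := e) (d := d) h4
          exact absurd (h2.symm.trans h5) (part_ne X one_ne_zero h3 norm_pt)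
      · rw [(sgz_of_norm h3).1] at h1
        exact key (h2.trans h1)
  · rintro ⟨h1, h2⟩
    exact Or.inr ⟨e, d, z, h1, h2, rfl⟩

theorem vtx_inj {v w : X.cells 0} {c : G ⧸ X.stab 0 v} {d : G ⧸ X.stab 0 w}
    (h : vtx X v c = vtx X w d) : (⟨v, c⟩ : Σ v, G ⧸ X.stab 0 v) = ⟨w, d⟩ :=
  (part_inj X norm_pt norm_pt h).1

theorem vtx_mem_star {v w : X.cells 0} {c : G ⧸ X.stab 0 v} {d : G ⧸ X.stab 0 w}
    (h : vtx X v c ∈ star X (vtx X w d)) : vtx X v c = vtx X w d := by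
  rcases h with h | ⟨e, d', z, h0, h1, h2⟩
  · exact h
  · rcases lt_or_eq_of_le (norm_le_disk z) with h3 | h3
    · exact absurd h2.symm (part_ne X one_ne_zero h3 norm_pt)
    · rw [(sgz_of_norm h3).1] at h1
      exact h2.trans h1

theorem star_disj {v w : X.cells 0} {c : G ⧸ X.stab 0 v} {d : G ⧸ X.stab 0 w} {x : X.space}
    (h : x ∈ star X (vtx X v c)) (h' : x ∈ star X (vtx X w d)) :
    (⟨v, c⟩ : Σ v, G ⧸ X.stab 0 v) = ⟨w, d⟩ := by
  apply vtx_inj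
  rcases h with rfl | ⟨e, d', z, h0, h1, rfl⟩
  · exact vtx_mem_star X h'
  · rw [← h1, (mem_star_edge X).1 h' |>.2]

theorem isOpen_of_dim (hdim : X.DimLE 1) {A : Set X.space}
    (h : ∀ e d, IsOpen (X.charMap 1 e d ⁻¹' A)) : IsOpen A := by
  rw [← isClosed_compl_iff, X.weak_topology]
  intro n i c
  rw [Set.preimage_compl, isClosed_compl_iff]
  match n, i, c with
  | 0, i, c =>
    haveI : Subsingleton (UnitDisk 0) := ⟨fun a b => (eq_pt a).trans (eq_pt b).symm⟩
    exact isOpen_discrete _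
  | 1, i, c => exact h i c
  | n + 2, i, c =>
    exact ((hdim (n + 2) (by
      rw [← Nat.cast_one, Nat.cast_lt]
      omega)).false i).elim

theorem isOpen_star (hdim : X.DimLE 1) (v : X.cells 0) (c : G ⧸ X.stab 0 v) :
    IsOpen (star X (vtx X v c)) := by
  refine isOpen_of_dim X hdim fun e d => ?_
  have hc : Continuous fun z : UnitDisk 1 => z.1 0 := by fun_prop
  have : X.charMap 1 e d ⁻¹' star X (vtx X v c) =
      {z : UnitDisk 1 | 0 < z.1 0 ∧ X.charMap 1 e d up = vtx X v c} ∪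
      {z : UnitDisk 1 | z.1 0 < 0 ∧ X.charMap 1 e d um = vtx X v c} := by
    ext z
    rw [Set.mem_preimage, mem_star_edge]
    simp only [Set.mem_union, Set.mem_ofPred_eq]
    unfold sgz
    rcases lt_trichotomy (z.1 0) 0 with h | h | h
    · simp [h, h.ne, h.not_gt]
    · simp [h]
    · simp [h, h.ne', h.not_gt]
  rw [this]
  refine IsOpen.union ?_ ?_
  · by_cases h : X.charMap 1 e d up = vtx X v c
    · simp only [h, and_true]
      exact isOpen_lt continuous_const hc
    · simp [h]
  · by_cases h : X.charMap 1 e d um = vtx X v c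
    · simp only [h, and_true]
      exact isOpen_lt hc continuous_const
    · simp [h]

/-- open edge -/
def oedge (e : X.cells 1) (d : G ⧸ X.stab 1 e) : Set X.space :=
  {x | ∃ z : UnitDisk 1, ‖z.1‖ < 1 ∧ X.charMap 1 e d z = x}

theorem isOpen_oedge (hdim : X.DimLE 1) (e : X.cells 1) (d : G ⧸ X.stab 1 e) :
    IsOpen (oedge X e d) := by
  refine isOpen_of_dim X hdim fun e' d' => ?_
  have hc : Continuous fun z : UnitDisk 1 => ‖z.1‖ := by fun_prop
  have : X.charMap 1 e' d' ⁻¹' oedge X e d =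
      {z : UnitDisk 1 | ‖z.1‖ < 1 ∧ (⟨e', d'⟩ : Σ i, G ⧸ X.stab 1 i) = ⟨e, d⟩} := by
    ext z
    rw [Set.mem_preimage]
    constructor
    · rintro ⟨w, hw, h⟩
      rcases lt_or_eq_of_le (norm_le_disk z) with h3 | h3
      · exact ⟨h3, (part_inj X h3 hw h.symm).1⟩
      · obtain ⟨v', c', h5⟩ := exists_vtx X (e := e') (d := d') h3
        exact absurd (h.trans h5) (part_ne X one_ne_zero hw norm_pt)
    · rintro ⟨h1, h2⟩
      obtain ⟨rfl, h6⟩ := Sigma.mk.inj h2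
      obtain rfl := eq_of_heq h6
      exact ⟨z, h1, rfl⟩
  rw [this]
  by_cases h : (⟨e', d'⟩ : Σ i, G ⧸ X.stab 1 i) = ⟨e, d⟩
  · simp only [h, and_true]
    exact isOpen_lt hc continuous_const
  · simp [h]

theorem smul_star {v : X.cells 0} {c : G ⧸ X.stab 0 v} {x : X.space} (g : G)
    (h : x ∈ star X (vtx X v c)) : g • x ∈ star X (vtx X v (g • c)) := by
  have hv : vtx X v (g • c) = g • vtx X v c := X.charMap_equivariant _ _ _ _ _
  rw [hv]
  rcases h with rfl | ⟨e, d, z, h0, h1, rfl⟩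
  · exact Or.inl rfl
  · refine Or.inr ⟨e, g • d, z, h0, ?_, ?_⟩
    · rw [X.charMap_equivariant, h1]
    · rw [X.charMap_equivariant]

theorem smul_oedge {e : X.cells 1} {d : G ⧸ X.stab 1 e} {x : X.space} (g : G)
    (h : x ∈ oedge X e d) : g • x ∈ oedge X e (g • d) := by
  obtain ⟨z, hz, rfl⟩ := h
  exact ⟨z, hz, X.charMap_equivariant _ _ _ _ _⟩

theorem oedge_disj {v w : X.cells 1} {c : G ⧸ X.stab 1 v} {d : G ⧸ X.stab 1 w} {x : X.space}
    (h : x ∈ oedge X v c) (h' : x ∈ oedge X w d) :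
    (⟨v, c⟩ : Σ v, G ⧸ X.stab 1 v) = ⟨w, d⟩ := by
  obtain ⟨z, hz, rfl⟩ := h
  obtain ⟨z', hz', h⟩ := h'
  exact (part_inj X hz hz' h.symm).1

theorem star_or_edge (hdim : X.DimLE 1) (x : X.space) :
    (∃ v c, x ∈ star X (vtx X v c)) ∨ ∃ e d, x ∈ oedge X e d := by
  obtain ⟨⟨n, i, c, z⟩, ⟨hz, hx⟩, -⟩ := X.partition x
  dsimp only at hz hx
  match n, i, c, z with
  | 0, i, c, z =>
    left
    refine ⟨i, c, Or.inl ?_⟩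
    rw [← hx, eq_pt z]
    rfl
  | 1, i, c, z => exact Or.inr ⟨i, c, z, hz, hx⟩
  | n + 2, i, c, z =>
    exact ((hdim (n + 2) (by
      rw [← Nat.cast_one, Nat.cast_lt]
      omega)).false i).elim

theorem main_le (F : Set (Subgroup G))
    (hF : IsSubgroupFamily F) (hX : ContractibleSpace X.space) (hdim : X.DimLE 1) (n m : ℕ)
    (hn : ∀ v, catGroup (X.stab 0 v) (restrictFamily F (X.stab 0 v)) ≤ n)
    (hm : ∀ e, catGroup (X.stab 1 e) (restrictFamily F (X.stab 1 e)) + 1 ≤ m) :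
    catGroup G F ≤ ((n + m : ℕ) : ℕ∞) := by
  haveI : ContinuousConstSMul G X.space := ⟨X.continuous_smul⟩
  obtain ⟨f, hf, hfe⟩ := exists_gmap_contractible (G := G) (Z := X.space)
  obtain ⟨V, hV1, hV2, hV3, hV4⟩ := pieces hF (X.stab 0) (fun v c => f ⁻¹' star X (vtx X v c))
    (fun v c => (isOpen_star X hdim v c).preimage hf) (fun i c j d x h1 h2 => star_disj X h1 h2)
    (fun i c g x h => by
      rw [Set.mem_preimage, hfe]
      exact smul_star X g h) hn
  obtain ⟨E, hE1, hE2, hE3, hE4⟩ : ∃ V : Fin m → Set (EM G), (∀ j, IsOpen (V j)) ∧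
      (∀ j (g : G), ∀ x ∈ V j, g • x ∈ V j) ∧
      (∀ i c, ∀ x ∈ f ⁻¹' oedge X i c, ∃ j, x ∈ V j) ∧
      ∀ j, ∀ x ∈ V j, ∃ H ∈ F, ∀ (g : G) (P : Path x (g • x)), (∀ t, P t ∈ V j) → g ∈ H := by
    cases m with
    | zero =>
      refine ⟨fun _ => ∅, fun j => j.elim0, fun j => j.elim0, fun i => ?_, fun j => j.elim0⟩
      have := hm i
      simp at this
    | succ m' =>
      refine pieces hF (X.stab 1) (fun v c => f ⁻¹' oedge X v c)
        (fun v c => (isOpen_oedge X hdim v c).preimage hf) (fun i c j d x h1 h2 => oedge_disj X h1 h2)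
        (fun i c g x h => by
          rw [Set.mem_preimage, hfe]
          exact smul_oedge X g h) (fun e => ?_)
      have := hm e
      rw [Nat.cast_succ] at this
      exact (ENat.add_le_add_iff_right ENat.one_ne_top).1 this
  let ε : Fin (n + m + 1) ≃ Fin (n + 1) ⊕ Fin m :=
    (finCongr (by omega)).trans finSumFinEquiv.symm
  refine catGroup_le (n := n + m) (fun i => Sum.elim V E (ε i)) ?_ ?_ ?_ ?_
  · intro i
    generalize ε i = k
    cases k with
    | inl j => exact hV1 j
    | inr j => exact hE1 j
  · intro i
    generalize ε i = k
    cases k with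
    | inl j => exact hV2 j
    | inr j => exact hE2 j
  · intro x
    have : ∃ k, x ∈ Sum.elim V E k := by
      rcases star_or_edge X hdim (f x) with ⟨v, c, h⟩ | ⟨e, d, h⟩
      · obtain ⟨j, hj⟩ := hV3 v c x h
        exact ⟨Sum.inl j, hj⟩
      · obtain ⟨j, hj⟩ := hE3 e d x h
        exact ⟨Sum.inr j, hj⟩
    obtain ⟨k, hk⟩ := this
    exact ⟨ε.symm k, by simpa using hk⟩
  · intro i
    generalize ε i = k
    cases k with
    | inl j => exact hV4 j
    | inr j => exact hE4 j

end Mil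

/-- **`cat_F` of graphs of groups (sum version).**
By Bass–Serre theory, `G` is the fundamental group of a graph of groups with vertex groups
`(G_v)_{v ∈ V}` and edge groups `(G_e)_{e ∈ E}` if and only if `G` acts on a tree — that is, a
contractible `1`-dimensional `G`-CW-complex `X` — with `V` the orbit representatives of the
vertices, `E` the orbit representatives of the edges, and `(G_v)`, `(G_e)` the corresponding
stabilisers.  We use this encoding: `V = X.cells 0`, `E = X.cells 1`, `G_v = X.stab 0 v`,
`G_e = X.stab 1 e`.  Then
`cat_F(G) ≤ sup_{v ∈ V} cat_{F|_{G_v}}(G_v) + sup_{e ∈ E} (cat_{F|_{G_e}}(G_e) + 1)`. -/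
theorem catF_graph_of_groups_sum (G : Type) [Group G] (F : Set (Subgroup G))
    (hF : IsSubgroupFamily F) (X : GCWComplex G) (hX : ContractibleSpace X.space)
    (hdim : X.DimLE 1) :
    catGroup G F ≤
      (⨆ v : X.cells 0, catGroup ↥(X.stab 0 v) (restrictFamily F (X.stab 0 v))) +
        ⨆ e : X.cells 1, (catGroup ↥(X.stab 1 e) (restrictFamily F (X.stab 1 e)) + 1) := by
  have hA := fun v => le_iSup
    (fun v : X.cells 0 => catGroup ↥(X.stab 0 v) (restrictFamily F (X.stab 0 v))) v
  have hB := fun e => le_iSup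
    (fun e : X.cells 1 => catGroup ↥(X.stab 1 e) (restrictFamily F (X.stab 1 e)) + 1) e
  revert hA hB
  generalize (⨆ v : X.cells 0, catGroup ↥(X.stab 0 v) (restrictFamily F (X.stab 0 v))) = a
  generalize (⨆ e : X.cells 1, (catGroup ↥(X.stab 1 e) (restrictFamily F (X.stab 1 e)) + 1)) = b
  intro hA hB
  cases a with
  | top => simp
  | coe n =>
    cases b with
    | top => simp
    | coe m =>
      have := Mil.main_le X F hF hX hdim n m hA hB
      rwa [Nat.cast_add] at this

end
end

section
/- Let Y and Z be path-connected topological spaces and let f : Y → Z be a continuous map that induces an isomorphism f_* : π₁(Y,y₀) → π₁(Z,f(y₀)) on fundamental groups. Let F be a family of subgroups of π₁(Z,f(y₀)) and let f_*^{-1}(F) be the family of subgroups H of π₁(Y,y₀) with f_*(H) ∈ F. Then cat_{f_*^{-1}(F)}(Y) ≤ cat_F(Z). -/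
open scoped Topology
open CategoryTheory

noncomputable section

attribute [local instance] Path.Homotopic.setoid

/-- The homomorphism induced by a continuous map on fundamental groups. -/
def piOneMap {Y Z : Type} [TopologicalSpace Y] [TopologicalSpace Z] (f : C(Y, Z)) (y₀ : Y) :
    FundamentalGroup Y y₀ →* FundamentalGroup Z (f y₀) :=
  Functor.mapEnd (X := FundamentalGroupoid.mk (X := TopCat.of Y) y₀)
    (FundamentalGroupoid.fundamentalGroupoidFunctor.map
      (show TopCat.of Y ⟶ TopCat.of Z from TopCat.ofHom f))

/-- **Monotonicity of `cat_F` under `π₁`-isomorphisms.**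
Let `f : Y → Z` be a continuous map of path-connected spaces inducing an isomorphism on
fundamental groups, let `F` be a family of subgroups of `π₁(Z, f y₀)`, and let `f_*⁻¹(F)` be the
family of subgroups `H` of `π₁(Y, y₀)` with `f_*(H) ∈ F`.  Then
`cat_{f_*⁻¹(F)}(Y) ≤ cat_F(Z)`. -/
theorem catF_le_of_pi1_iso (Y Z : Type) [TopologicalSpace Y] [TopologicalSpace Z]
    [PathConnectedSpace Y] [PathConnectedSpace Z] (f : C(Y, Z)) (y₀ : Y)
    (hf : Function.Bijective (piOneMap f y₀))
    (F : Set (Subgroup (FundamentalGroup Z (f y₀)))) (hF : IsSubgroupFamily F) :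
    catSpace y₀ (MulEquiv.refl (FundamentalGroup Y y₀))
        {H : Subgroup (FundamentalGroup Y y₀) | H.map (piOneMap f y₀) ∈ F} ≤
      catSpace (f y₀) (MulEquiv.refl (FundamentalGroup Z (f y₀))) F := by
  refine sInf_le_sInf ?_
  rintro c ⟨n, rfl, U, hUo, hUc, hU⟩
  refine ⟨n, rfl, fun i => f ⁻¹' (U i), fun i => (hUo i).preimage f.continuous,
    fun y => hUc (f y), ?_⟩
  intro i y hy q
  obtain ⟨H, hH, hp⟩ := hU i (f y) hy (q.map f.continuous)
  refine ⟨H.comap (piOneMap f y₀), hF.mem_of_le H hH _ (Subgroup.map_comap_le _ _), ?_⟩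
  intro p hpU
  have key := hp (p.map f.continuous) hpU
  have e : piOneMap f y₀ (pathToPi1 (Path.Homotopic.Quotient.trans ⟦q⟧
      (Path.Homotopic.Quotient.trans ⟦p⟧ ⟦q.symm⟧))) =
      pathToPi1 (Path.Homotopic.Quotient.trans ⟦q.map f.continuous⟧
      (Path.Homotopic.Quotient.trans ⟦p.map f.continuous⟧ ⟦(q.map f.continuous).symm⟧)) := by
    change Path.Homotopic.Quotient.mk ((q.trans (p.trans q.symm)).map f.continuous) =
      Path.Homotopic.Quotient.mk ((q.map f.continuous).trans
        ((p.map f.continuous).trans (q.map f.continuous).symm))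
    rw [Path.map_trans, Path.map_trans, Path.map_symm]
  exact (congrArg (· ∈ H) e).mpr key

end
end
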